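/- arXiv:2009.13728 — 2 statements merged into one kernel-verified Lean document; each statement's English description precedes it below -/
import Mathlib

section
/- Let a and b be real constants such that none of −a, −b, −(a+b) is a natural number (including 0), and assume ab < 1. Then the function f(z) = z F(a,b;a+b;z) is not convex in 𝔻; that is, it is not the case that f is injective on 𝔻 with f(𝔻) a convex subset of ℂ. -/
open Complex Filter MeasureTheory Metric Set

/-- The Gaussian hypergeometric function on the unit disc (power series). -/
noncomputable def hyperF (a b c : ℝ) (z : ℂ) : ℂ :=
  ∑' n : ℕ, (((ascPochhammer ℝ n).eval a * (ascPochhammer ℝ n).eval b /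
      ((ascPochhammer ℝ n).eval c * (n.factorial : ℝ)) : ℝ) : ℂ) * z ^ n

/-!
Write `F(a,b;a+b;z) = ∑ Aₙ zⁿ`. The sequence `uₙ = n Aₙ` tends to `L = Γ(a+b) / (Γ(a) Γ(b)) ≠ 0` and
satisfies `uₙ₊₁ - uₙ = ab uₙ / (n (n + a + b))`, so `Aₙ = L (1/n - ab/n²) + O(n⁻³)`. Summing the
series, `f / L = -log (1 - z) + (1 - ab) (1 - z) log (1 - z) + h` with `h` Lipschitz at `1` and
`h(1)` real.

As `Re → +∞` inside the image of `f / L`, one has `z → 1` and the imaginary part is asymptotically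
at most `π / 2`. Were the image convex, it would contain almost horizontal segments from each of its
points to points arbitrarily far to the right, so `π / 2` would bound all its imaginary parts. But
near `z = 1`, almost tangentially to the unit circle, the term `(1 - ab) (1 - z) log (1 - z)` pushes
the imaginary part above `π / 2`, because `1 - ab > 0`.
-/

open Asymptotics
open scoped Real Topology

section SequenceAsymptotics

lemma norm_le_of_tendsto_zero_of_norm_sub_le {E : Type*} [SeminormedAddCommGroup E] {v : ℕ → E}
    {e : ℕ → ℝ} {n : ℕ} (hv : Tendsto v atTop (𝓝 0)) (he : ∀ k, 0 ≤ e k)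
    (hve : ∀ k ≥ n, ‖v (k + 1) - v k‖ ≤ e k - e (k + 1)) : ‖v n‖ ≤ e n := by
  have hdist : ∀ m ≥ n, dist (v n) (v m) ≤ e n := fun m hm ↦
    calc dist (v n) (v m)
        ≤ ∑ k ∈ Finset.Ico n m, (e k - e (k + 1)) :=
          dist_le_Ico_sum_of_dist_le hm fun hk _ ↦ by
            rw [dist_comm, dist_eq_norm]; exact hve _ hk
      _ = e n - e m := by
          rw [← neg_inj, ← Finset.sum_neg_distrib, neg_sub, ← Finset.sum_Ico_sub e hm]
          simp only [neg_sub]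
      _ ≤ e n := sub_le_self _ (he m)
  rw [← dist_zero_right]
  exact le_of_tendsto (tendsto_const_nhds.dist hv) (eventually_atTop.2 ⟨n, hdist⟩)

lemma inv_pow_add_two_le_two_mul_sub (p : ℕ) {x : ℝ} (hx : 1 ≤ x) :
    (x ^ (p + 2))⁻¹ ≤ 2 * ((x ^ (p + 1))⁻¹ - ((x + 1) ^ (p + 1))⁻¹) := by
  have : 0 < x := by linarith
  have hsucc : ((x + 1) ^ (p + 1))⁻¹ ≤ (x ^ p * (x + 1))⁻¹ := by
    rw [pow_succ]
    gcongr
    linarith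
  have htwo : (x ^ (p + 2))⁻¹ ≤ 2 * (x ^ (p + 1) * (x + 1))⁻¹ := by
    rw [← div_eq_mul_inv, inv_eq_one_div, div_le_div_iff₀ (by positivity) (by positivity)]
    have : 0 ≤ x ^ (p + 1) * (x - 1) := mul_nonneg (by positivity) (by linarith)
    calc 1 * (x ^ (p + 1) * (x + 1)) ≤ x ^ (p + 1) * (x + 1) + x ^ (p + 1) * (x - 1) := by linarith
      _ = 2 * x ^ (p + 2) := by ring
  calc (x ^ (p + 2))⁻¹ ≤ 2 * (x ^ (p + 1) * (x + 1))⁻¹ := htwo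
    _ = 2 * ((x ^ (p + 1))⁻¹ - (x ^ p * (x + 1))⁻¹) := by field_simp; ring
    _ ≤ 2 * ((x ^ (p + 1))⁻¹ - ((x + 1) ^ (p + 1))⁻¹) := by gcongr

lemma isBigO_inv_pow_of_sub_isBigO {E : Type*} [SeminormedAddCommGroup E] {v : ℕ → E} {p : ℕ}
    (hv : Tendsto v atTop (𝓝 0))
    (hsub : (fun n ↦ v (n + 1) - v n) =O[atTop] fun n : ℕ ↦ ((n : ℝ) ^ (p + 2))⁻¹) :
    v =O[atTop] fun n : ℕ ↦ ((n : ℝ) ^ (p + 1))⁻¹ := by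
  obtain ⟨C, hC, hbound⟩ := hsub.exists_pos
  obtain ⟨N, hN⟩ := eventually_atTop.1 (hbound.bound.and (eventually_ge_atTop 1))
  refine .of_bound (C * 2) (eventually_atTop.2 ⟨N, fun n hn ↦ ?_⟩)
  rw [Real.norm_of_nonneg (by positivity)]
  refine norm_le_of_tendsto_zero_of_norm_sub_le
    (e := fun k ↦ C * 2 * ((k : ℝ) ^ (p + 1))⁻¹) hv (fun k ↦ by positivity) fun k hk ↦ ?_
  obtain ⟨hvk, hk1⟩ := hN k (hn.trans hk)
  rw [Real.norm_of_nonneg (by positivity)] at hvk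
  calc ‖v (k + 1) - v k‖ ≤ C * ((k : ℝ) ^ (p + 2))⁻¹ := hvk
    _ ≤ C * (2 * (((k : ℝ) ^ (p + 1))⁻¹ - (((k : ℝ) + 1) ^ (p + 1))⁻¹)) := by
        gcongr
        exact inv_pow_add_two_le_two_mul_sub p (mod_cast hk1)
    _ = _ := by push_cast; ring

lemma isBigO_inv_natCast_add_const (s : ℝ) :
    (fun n : ℕ ↦ ((n : ℝ) + s)⁻¹) =O[atTop] fun n : ℕ ↦ (n : ℝ)⁻¹ := by
  have hs : (fun _ : ℕ ↦ s) =o[atTop] fun n : ℕ ↦ (n : ℝ) :=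
    (isLittleO_const_id_atTop s).comp_tendsto tendsto_natCast_atTop_atTop
  refine IsBigO.inv_rev (by simpa only [add_comm] using hs.right_isBigO_add) ?_
  filter_upwards [eventually_ne_atTop 0] with n hn hn0
  exact absurd hn0 (mod_cast hn)

variable {u : ℕ → ℝ} {κ s L : ℝ}

lemma sub_isBigO_inv_of_recurrence (hu : Tendsto u atTop (𝓝 L))
    (hrec : ∀ᶠ n : ℕ in atTop, u (n + 1) - u n = κ * u n * ((n : ℝ)⁻¹ * (n + s)⁻¹)) :
    (fun n ↦ u n - L) =O[atTop] fun n : ℕ ↦ (n : ℝ)⁻¹ := by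
  have hinv := (isBigO_refl (fun n : ℕ ↦ (n : ℝ)⁻¹) atTop).mul (isBigO_inv_natCast_add_const s)
  have hdiff : (fun n ↦ (u (n + 1) - L) - (u n - L)) =O[atTop]
      fun n : ℕ ↦ ((n : ℝ) ^ (0 + 2))⁻¹ := by
    refine (((hu.isBigO_one ℝ).const_mul_left κ).mul hinv).congr' ?_ (.of_forall fun n ↦ ?_)
    · filter_upwards [hrec] with n hn
      rw [← hn]; ring
    · ring
  simpa using isBigO_inv_pow_of_sub_isBigO (tendsto_sub_nhds_zero_iff.2 hu) hdiff

lemma sub_add_div_isBigO_inv_sq_of_recurrence (hu : Tendsto u atTop (𝓝 L))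
    (hrec : ∀ᶠ n : ℕ in atTop, u (n + 1) - u n = κ * u n * ((n : ℝ)⁻¹ * (n + s)⁻¹)) :
    (fun n : ℕ ↦ u n - L + κ * L / n) =O[atTop] fun n : ℕ ↦ ((n : ℝ) ^ 2)⁻¹ := by
  have hlim : Tendsto (fun n : ℕ ↦ u n - L + κ * L / n) atTop (𝓝 0) := by
    simpa using (tendsto_sub_nhds_zero_iff.2 hu).add (tendsto_const_div_atTop_nhds_zero_nat (κ * L))
  have hinv := (isBigO_refl (fun n : ℕ ↦ (n : ℝ)⁻¹) atTop).mul (isBigO_inv_natCast_add_const s)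
  have hfirst := ((sub_isBigO_inv_of_recurrence hu hrec).const_mul_left κ).mul hinv
  have hsecond := (hinv.mul (isBigO_inv_natCast_add_const 1)).const_mul_left (κ * L * (1 - s))
  refine isBigO_inv_pow_of_sub_isBigO hlim ((hfirst.add (hsecond.congr_right fun n ↦ ?_)).congr'
    ?_ (.of_forall fun n ↦ ?_))
  · ring
  · filter_upwards [hrec, eventually_gt_atTop 0,
      tendsto_natCast_atTop_atTop.eventually_gt_atTop (-s)] with n hn hn0 hns
    have hn0' : (n : ℝ) ≠ 0 := mod_cast hn0.ne'
    have hns' : (n : ℝ) + s ≠ 0 := by linarith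
    rw [show ∀ x y : ℝ, u (n + 1) - L + x - (u n - L + y) = (u (n + 1) - u n) + x - y by
      intros; ring, hn]
    push_cast
    field_simp
    ring
  · ring

end SequenceAsymptotics

section HypergeometricCoefficients

lemma prod_range_add_natCast_eq_ascPochhammer_eval {R : Type*} [CommSemiring R] (x : R) (n : ℕ) :
    ∏ j ∈ Finset.range n, (x + j) = (ascPochhammer R n).eval x := by
  induction n with
  | zero => simp
  | succ k ih => rw [ascPochhammer_succ_eval, Finset.prod_range_succ, ih]

lemma ordinaryHypergeometricCoefficient_succ {𝕂 : Type*} [Field 𝕂] (a b c : 𝕂) (n : ℕ) :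
    ordinaryHypergeometricCoefficient a b c (n + 1) =
      ordinaryHypergeometricCoefficient a b c n * ((a + n) * (b + n) * ((c + n) * (n + 1))⁻¹) := by
  simp only [ordinaryHypergeometricCoefficient, ascPochhammer_succ_eval, Nat.factorial_succ,
    Nat.cast_mul, Nat.cast_succ, mul_inv]
  ring

lemma tendsto_rpow_mul_ordinaryHypergeometricCoefficient {a b : ℝ} (c : ℝ)
    (ha : ∀ n : ℕ, a ≠ -n) (hb : ∀ n : ℕ, b ≠ -n) :
    Tendsto (fun n : ℕ ↦ (n : ℝ) ^ (c - a - b) *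
        ((n + 1) * ordinaryHypergeometricCoefficient a b c (n + 1)))
      atTop (𝓝 (Real.Gamma c / (Real.Gamma a * Real.Gamma b))) := by
  have hGamma := (Real.GammaSeq_tendsto_Gamma c).div
    ((Real.GammaSeq_tendsto_Gamma a).mul (Real.GammaSeq_tendsto_Gamma b))
    (mul_ne_zero (Real.Gamma_ne_zero ha) (Real.Gamma_ne_zero hb))
  refine hGamma.congr' ?_
  filter_upwards [eventually_gt_atTop 0] with n hn
  have hn0 : (0 : ℝ) < n := mod_cast hn
  simp only [Pi.div_apply, Real.GammaSeq, prod_range_add_natCast_eq_ascPochhammer_eval,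
    ordinaryHypergeometricCoefficient, Real.rpow_sub hn0, Nat.factorial_succ, Nat.cast_mul,
    Nat.cast_succ]
  field_simp

/-- The limit `Γ(a+b) / (Γ(a) Γ(b))` of `n` times the `n`-th Taylor coefficient of
`F(a,b;a+b;·)`. -/
noncomputable def hyperCoeffLimit (a b : ℝ) : ℝ :=
  Real.Gamma (a + b) / (Real.Gamma a * Real.Gamma b)

variable {a b : ℝ}

lemma hyperCoeffLimit_ne_zero (ha : ∀ n : ℕ, a ≠ -n) (hb : ∀ n : ℕ, b ≠ -n)
    (hab : ∀ n : ℕ, a + b ≠ -n) : hyperCoeffLimit a b ≠ 0 :=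
  div_ne_zero (Real.Gamma_ne_zero hab) (mul_ne_zero (Real.Gamma_ne_zero ha) (Real.Gamma_ne_zero hb))

lemma tendsto_natCast_mul_ordinaryHypergeometricCoefficient_add
    (ha : ∀ n : ℕ, a ≠ -n) (hb : ∀ n : ℕ, b ≠ -n) :
    Tendsto (fun n : ℕ ↦ n * ordinaryHypergeometricCoefficient a b (a + b) n) atTop
      (𝓝 (hyperCoeffLimit a b)) := by
  rw [hyperCoeffLimit, ← tendsto_add_atTop_iff_nat 1]
  simpa using tendsto_rpow_mul_ordinaryHypergeometricCoefficient (a + b) ha hb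

-- Comes down to the identity `(a + n) * (b + n) - n * (a + b + n) = a * b`.
lemma natCast_mul_ordinaryHypergeometricCoefficient_add_succ_sub {n : ℕ} (hn : n ≠ 0)
    (hab : (n : ℝ) + (a + b) ≠ 0) :
    (n + 1 : ℕ) * ordinaryHypergeometricCoefficient a b (a + b) (n + 1) -
        n * ordinaryHypergeometricCoefficient a b (a + b) n =
      a * b * (n * ordinaryHypergeometricCoefficient a b (a + b) n) *
        ((n : ℝ)⁻¹ * (n + (a + b))⁻¹) := by
  have hn0 : (n : ℝ) ≠ 0 := mod_cast hn
  have hab' : a + b + n ≠ 0 := by rwa [add_comm]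
  rw [ordinaryHypergeometricCoefficient_succ]
  generalize ordinaryHypergeometricCoefficient a b (a + b) n = A
  push_cast
  field_simp
  ring

/-- The coefficient of `z ^ (n + 1)` in the remainder of `z F(a,b;a+b;z) / L` after subtracting its
singular part `-log (1 - z) + (1 - a * b) * ((1 - z) * log (1 - z))`, where `L` is
`hyperCoeffLimit a b`. The value `(1 - a * b) / 0 = 0` at `n = 0` is the intended one. -/
noncomputable def logRemainderCoeff (a b : ℝ) (n : ℕ) : ℝ :=
  ordinaryHypergeometricCoefficient a b (a + b) n / hyperCoeffLimit a b -
    ((1 - a * b) / n + a * b / (n + 1))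

lemma logRemainderCoeff_isBigO (ha : ∀ n : ℕ, a ≠ -n) (hb : ∀ n : ℕ, b ≠ -n)
    (hab : ∀ n : ℕ, a + b ≠ -n) :
    logRemainderCoeff a b =O[atTop] fun n : ℕ ↦ ((n : ℝ) ^ 3)⁻¹ := by
  have hL := hyperCoeffLimit_ne_zero ha hb hab
  have hcoeff := sub_add_div_isBigO_inv_sq_of_recurrence (κ := a * b) (s := a + b)
    (tendsto_natCast_mul_ordinaryHypergeometricCoefficient_add ha hb) (by
      filter_upwards [eventually_ne_atTop 0] with n hn
      exact natCast_mul_ordinaryHypergeometricCoefficient_add_succ_sub hn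
        fun h ↦ hab n (by linarith))
  have hinv := isBigO_refl (fun n : ℕ ↦ (n : ℝ)⁻¹) atTop
  have hmain := (hcoeff.mul hinv).const_mul_left (hyperCoeffLimit a b)⁻¹
  have hcorr := ((hinv.mul hinv).mul (isBigO_inv_natCast_add_const 1)).const_mul_left (-(a * b))
  refine ((hmain.add (hcorr.congr_right fun n ↦ ?_)).congr' ?_ (.of_forall fun n ↦ ?_))
  · ring
  · filter_upwards [eventually_ne_atTop 0] with n hn
    have hn0 : (n : ℝ) ≠ 0 := mod_cast hn
    unfold logRemainderCoeff
    generalize ordinaryHypergeometricCoefficient a b (a + b) n = A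
    field_simp
    ring
  · ring

lemma summable_succ_mul_norm_logRemainderCoeff (ha : ∀ n : ℕ, a ≠ -n) (hb : ∀ n : ℕ, b ≠ -n)
    (hab : ∀ n : ℕ, a + b ≠ -n) :
    Summable fun n : ℕ ↦ ((n + 1 : ℕ) : ℝ) * ‖(logRemainderCoeff a b n : ℂ)‖ := by
  have hsucc : (fun n : ℕ ↦ ((n + 1 : ℕ) : ℝ)) =O[atTop] fun n : ℕ ↦ (n : ℝ) :=
    .of_bound 2 <| by
      filter_upwards [eventually_ge_atTop 1] with n hn
      rw [Real.norm_natCast, Real.norm_natCast]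
      exact_mod_cast (by lia : n + 1 ≤ 2 * n)
  refine summable_of_isBigO_nat (Real.summable_nat_pow_inv.2 one_lt_two)
    ((hsucc.mul (logRemainderCoeff_isBigO ha hb hab).norm_left).congr' ?_ ?_)
  · simp
  · filter_upwards [eventually_ne_atTop 0] with n hn
    have hn0 : (n : ℝ) ≠ 0 := mod_cast hn
    field_simp

end HypergeometricCoefficients

section LogExpansion

lemma norm_one_sub_pow_le {R : Type*} [NormedRing R] [NormOneClass R] {z : R} (hz : ‖z‖ ≤ 1)
    (n : ℕ) : ‖1 - z ^ n‖ ≤ n * ‖1 - z‖ := by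
  have hgeom : ‖∑ i ∈ Finset.range n, z ^ i‖ ≤ n := by
    simpa using norm_sum_le_of_le (Finset.range n)
      fun i _ ↦ (norm_pow_le z i).trans (pow_le_one₀ (norm_nonneg z) hz)
  rw [← geom_sum_mul_neg]
  exact (norm_mul_le _ _).trans (by gcongr)

section PowerFamily

variable {ι : Type*} {c : ι → ℂ} {k : ι → ℕ}

lemma summable_mul_pow_of_norm_le_one (hc : Summable fun i ↦ ‖c i‖) {z : ℂ} (hz : ‖z‖ ≤ 1) :
    Summable fun i ↦ c i * z ^ k i :=
  .of_norm_bounded hc fun i ↦ by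
    rw [norm_mul, norm_pow]
    exact mul_le_of_le_one_right (norm_nonneg _) (pow_le_one₀ (norm_nonneg z) hz)

lemma norm_tsum_mul_pow_sub_tsum_le (hc : Summable fun i ↦ ‖c i‖)
    (hkc : Summable fun i ↦ k i * ‖c i‖) {z : ℂ} (hz : ‖z‖ ≤ 1) :
    ‖∑' i, c i * z ^ k i - ∑' i, c i‖ ≤ (∑' i, k i * ‖c i‖) * ‖1 - z‖ := by
  rw [norm_sub_rev, ← hc.of_norm.tsum_sub (summable_mul_pow_of_norm_le_one hc hz)]
  refine tsum_of_norm_bounded (hkc.hasSum.mul_right _) fun i ↦ ?_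
  calc ‖c i - c i * z ^ k i‖ = ‖c i‖ * ‖1 - z ^ k i‖ := by rw [← norm_mul]; ring_nf
    _ ≤ ‖c i‖ * (k i * ‖1 - z‖) := by gcongr; exact norm_one_sub_pow_le hz _
    _ = k i * ‖c i‖ * ‖1 - z‖ := by ring

end PowerFamily

lemma hyperF_eq_tsum_ordinaryHypergeometricCoefficient (a b c : ℝ) (z : ℂ) :
    hyperF a b c z = ∑' n : ℕ, ((ordinaryHypergeometricCoefficient a b c n : ℝ) : ℂ) * z ^ n := by
  refine tsum_congr fun n ↦ ?_
  congr 2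
  rw [ordinaryHypergeometricCoefficient, div_eq_mul_inv, mul_inv]
  ring

lemma hasSum_log_singular_part (γ : ℂ) {z : ℂ} (hz : ‖z‖ < 1) :
    HasSum (fun n : ℕ ↦ (γ / n + (1 - γ) / (n + 1)) * z ^ (n + 1))
      (-log (1 - z) + γ * ((1 - z) * log (1 - z))) := by
  have hlog := (hasSum_taylorSeries_neg_log hz).mul_left (γ * z)
  have hlog_succ := (hasSum_taylorSeries_neg_log' hz).mul_left (1 - γ)
  convert! hlog.add hlog_succ using 1
  · ext n; ring
  · ring

lemma mul_hyperF_add_eq {a b : ℝ} (hL : hyperCoeffLimit a b ≠ 0)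
    (hsum : Summable fun n ↦ ‖(logRemainderCoeff a b n : ℂ)‖) {z : ℂ} (hz : ‖z‖ < 1) :
    z * hyperF a b (a + b) z = hyperCoeffLimit a b *
      (-log (1 - z) + (((1 - a * b : ℝ) : ℂ) * ((1 - z) * log (1 - z)) +
        ∑' n, (logRemainderCoeff a b n : ℂ) * z ^ (n + 1))) := by
  have htotal := ((hasSum_log_singular_part ((1 - a * b : ℝ) : ℂ) hz).add
    (summable_mul_pow_of_norm_le_one (k := fun n ↦ n + 1) hsum hz.le).hasSum).mul_left
    (hyperCoeffLimit a b : ℂ)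
  rw [← add_assoc, ← htotal.tsum_eq, hyperF_eq_tsum_ordinaryHypergeometricCoefficient,
    ← tsum_mul_left]
  refine tsum_congr fun n ↦ ?_
  have hcoeff : ordinaryHypergeometricCoefficient a b (a + b) n =
      hyperCoeffLimit a b * ((1 - a * b) / n + a * b / (n + 1) + logRemainderCoeff a b n) := by
    rw [logRemainderCoeff, add_sub_cancel, mul_div_cancel₀ _ hL]
  rw [hcoeff]
  push_cast
  ring

lemma exists_mul_hyperF_add_eq_log_expansion {a b : ℝ} (ha : ∀ n : ℕ, a ≠ -n)
    (hb : ∀ n : ℕ, b ≠ -n) (hab : ∀ n : ℕ, a + b ≠ -n) :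
    ∃ (L C r : ℝ) (h : ℂ → ℂ), L ≠ 0 ∧ (∀ z ∈ ball (0 : ℂ) 1, ‖h z - r‖ ≤ C * ‖1 - z‖) ∧
      ∀ z ∈ ball (0 : ℂ) 1, z * hyperF a b (a + b) z =
        L * (-log (1 - z) + (((1 - a * b : ℝ) : ℂ) * ((1 - z) * log (1 - z)) + h z)) := by
  have hL := hyperCoeffLimit_ne_zero ha hb hab
  have hsum_succ := summable_succ_mul_norm_logRemainderCoeff ha hb hab
  have hsum : Summable fun n ↦ ‖(logRemainderCoeff a b n : ℂ)‖ :=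
    .of_nonneg_of_le (fun n ↦ norm_nonneg _)
      (fun n ↦ le_mul_of_one_le_left (norm_nonneg _) (mod_cast Nat.succ_pos n)) hsum_succ
  refine ⟨hyperCoeffLimit a b, ∑' n : ℕ, (n + 1 : ℕ) * ‖(logRemainderCoeff a b n : ℂ)‖,
    ∑' n, logRemainderCoeff a b n, fun z ↦ ∑' n, (logRemainderCoeff a b n : ℂ) * z ^ (n + 1),
    hL, fun z hz ↦ ?_, fun z hz ↦ mul_hyperF_add_eq hL hsum (mem_ball_zero_iff.1 hz)⟩
  rw [ofReal_tsum]
  exact norm_tsum_mul_pow_sub_tsum_le hsum hsum_succ (mem_ball_zero_iff.1 hz).le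

end LogExpansion

section ConvexImage

lemma le_of_convex_of_le_at_infinity {E : Type*} [AddCommGroup E] [Module ℝ E] {S : Set E}
    (hS : Convex ℝ S) (φ ψ : E →ₗ[ℝ] ℝ) {M β m : ℝ} (hβ : ∀ w ∈ S, M ≤ φ w → ψ w ≤ β)
    (hunbdd : ∀ R, ∃ q ∈ S, R ≤ φ q ∧ m ≤ ψ q) {p : E} (hp : p ∈ S) : ψ p ≤ β := by
  by_contra! hpβ
  obtain ⟨t, ht, ht0, ht1⟩ : ∃ t : ℝ, β < (1 - t) * ψ p + t * m ∧ 0 < t ∧ t < 1 := by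
    have hcont : Continuous fun t : ℝ ↦ (1 - t) * ψ p + t * m := by fun_prop
    have hnear := (hcont.tendsto 0).eventually_const_lt (u := β) (by simpa using hpβ)
    exact ((hnear.filter_mono nhdsWithin_le_nhds).and (Ioo_mem_nhdsGT one_pos)).exists
  obtain ⟨q, hq, hφq, hψq⟩ := hunbdd ((M - (1 - t) * φ p) / t)
  rw [div_le_iff₀ ht0] at hφq
  have hmem := hS hp hq (sub_nonneg.2 ht1.le) ht0.le (sub_add_cancel 1 t)
  have hle := hβ _ hmem (by simp only [map_add, map_smul, smul_eq_mul]; linarith)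
  simp only [map_add, map_smul, smul_eq_mul] at hle
  have : t * m ≤ t * ψ q := by gcongr
  linarith

lemma one_sub_re_pos_of_mem_ball {z : ℂ} (hz : z ∈ ball (0 : ℂ) 1) : 0 < (1 - z).re := by
  have := (re_le_norm z).trans_lt (mem_ball_zero_iff.1 hz)
  simpa using this

lemma neg_log_one_sub_im_le {z : ℂ} (hz : z ∈ ball (0 : ℂ) 1) : (-log (1 - z)).im ≤ π / 2 := by
  rw [neg_im, log_im]
  have harg := abs_arg_le_pi_div_two_iff.2 (one_sub_re_pos_of_mem_ball hz).le
  linarith [(abs_le.1 harg).1]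

lemma exists_mem_ball_neg_log_one_sub_eq_ofReal {t : ℝ} (ht : 0 < t) :
    ∃ z ∈ ball (0 : ℂ) 1, -log (1 - z) = t := by
  refine ⟨1 - Real.exp (-t), ?_, ?_⟩
  · have hexp : Real.exp (-t) < 1 := Real.exp_lt_one_iff.2 (neg_lt_zero.2 ht)
    rw [mem_ball_zero_iff, ← ofReal_one, ← ofReal_sub, norm_real, Real.norm_eq_abs, abs_lt]
    constructor <;> linarith [Real.exp_pos (-t)]
  · rw [sub_sub_cancel, ← ofReal_log (Real.exp_pos _).le, Real.log_exp, ofReal_neg, neg_neg]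

lemma im_le_of_convex_image_neg_log_add {k : ℂ → ℂ} {K : ℝ} {ℓ : ℂ}
    (hK : ∀ z ∈ ball (0 : ℂ) 1, ‖k z‖ ≤ K) (hk : Tendsto k (𝓝[ball 0 1] 1) (𝓝 ℓ))
    (hconv : Convex ℝ ((fun z ↦ -log (1 - z) + k z) '' ball 0 1))
    {z : ℂ} (hz : z ∈ ball (0 : ℂ) 1) : (-log (1 - z) + k z).im ≤ π / 2 + ℓ.im := by
  refine le_of_forall_pos_le_add fun ε hε ↦ ?_
  obtain ⟨ρ, hρ, hnear⟩ : ∃ ρ > 0, ∀ w ∈ ball (0 : ℂ) 1, ‖1 - w‖ < ρ → (k w).im < ℓ.im + ε := by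
    have him := (continuous_im.continuousAt.tendsto.comp hk).eventually_lt_const
      (show ℓ.im < ℓ.im + ε by linarith)
    obtain ⟨ρ, hρ, hsub⟩ := mem_nhdsWithin_iff.1 him
    exact ⟨ρ, hρ, fun w hw hwρ ↦
      hsub ⟨by rwa [mem_ball, dist_comm, dist_eq_norm], hw⟩⟩
  refine le_of_convex_of_le_at_infinity hconv reLm imLm (M := K + 1 - Real.log ρ) (m := -K)
    ?_ (fun R ↦ ?_) (mem_image_of_mem _ hz)
  · rintro _ ⟨w, hw, rfl⟩ hre
    simp only [reLm_coe, imLm_coe, add_re, add_im, neg_re, log_re] at hre ⊢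
    have hkre := (re_le_norm _).trans (hK w hw)
    have hw0 : 0 < ‖1 - w‖ := (one_sub_re_pos_of_mem_ball hw).trans_le (re_le_norm _)
    have hwρ := hnear w hw ((Real.log_lt_log_iff hw0 hρ).1 (by linarith))
    linarith [neg_log_one_sub_im_le hw]
  · have hK0 : 0 ≤ K := (norm_nonneg _).trans (hK z hz)
    obtain ⟨q, hq, hlog⟩ := exists_mem_ball_neg_log_one_sub_eq_ofReal
      (show 0 < |R| + K + 1 by positivity)
    refine ⟨_, mem_image_of_mem _ hq, ?_, ?_⟩
    · rw [reLm_coe, hlog, add_re, ofReal_re]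
      linarith [(abs_le.1 ((abs_re_le_norm _).trans (hK q hq))).1, le_abs_self R]
    · rw [imLm_coe, hlog, add_im, ofReal_im, zero_add]
      exact (abs_le.1 ((abs_im_le_norm _).trans (hK q hq))).1

end ConvexImage

section NonconvexImage

lemma norm_mul_log_le (w : ℂ) : ‖w * log w‖ ≤ |‖w‖ * Real.log ‖w‖| + π * ‖w‖ :=
  calc ‖w * log w‖ ≤ ‖w‖ * (|(log w).re| + |(log w).im|) := by
        rw [norm_mul]; gcongr; exact norm_le_abs_re_add_abs_im _
    _ ≤ ‖w‖ * (|Real.log ‖w‖| + π) := by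
        rw [log_re, log_im]; gcongr; exact abs_arg_le_pi w
    _ = |‖w‖ * Real.log ‖w‖| + π * ‖w‖ := by rw [abs_mul, abs_norm]; ring

lemma continuous_abs_norm_mul_log_add :
    Continuous fun w : ℂ ↦ |‖w‖ * Real.log ‖w‖| + π * ‖w‖ :=
  (Real.continuous_mul_log.comp continuous_norm).abs.add (continuous_norm.const_mul π)

lemma tendsto_mul_log_nhds_zero : Tendsto (fun w : ℂ ↦ w * log w) (𝓝 0) (𝓝 0) :=
  squeeze_zero_norm norm_mul_log_le <| by simpa using continuous_abs_norm_mul_log_add.tendsto 0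

lemma exists_norm_mul_log_le_of_norm_le (R : ℝ) : ∃ B, ∀ w : ℂ, ‖w‖ ≤ R → ‖w * log w‖ ≤ B := by
  obtain ⟨B, hB⟩ := (isCompact_closedBall (0 : ℂ) R).exists_bound_of_continuousOn
    continuous_abs_norm_mul_log_add.continuousOn
  exact ⟨B, fun w hw ↦ (norm_mul_log_le w).trans
    ((le_abs_self _).trans (hB w (mem_closedBall_zero_iff.2 hw)))⟩

-- The curve `w = -i θ exp (i θ)` approaches `0` almost tangentially to the circle `|1 - w| = 1`.
lemma exists_log_eq_of_tangential {θ : ℝ} (hθ0 : 0 < θ) (hθ1 : θ < 1) :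
    ∃ w : ℂ, 1 - w ∈ ball (0 : ℂ) 1 ∧ ‖w‖ = θ ∧ w.re = θ * Real.sin θ ∧ w.im = -(θ * Real.cos θ) ∧
      log w = ⟨Real.log θ, θ - π / 2⟩ := by
  set ζ : ℂ := ⟨Real.log θ, θ - π / 2⟩ with hζ
  have hnorm : ‖exp ζ‖ = θ := by rw [norm_exp, hζ, Real.exp_log hθ0]
  have hre : (exp ζ).re = θ * Real.sin θ := by
    rw [exp_re, hζ, Real.exp_log hθ0, Real.cos_sub_pi_div_two]
  have him : (exp ζ).im = -(θ * Real.cos θ) := by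
    rw [exp_im, hζ, Real.exp_log hθ0, Real.sin_sub_pi_div_two, mul_neg]
  have hmem : 1 - exp ζ ∈ ball (0 : ℂ) 1 := by
    have hsin : θ < 2 * Real.sin θ := by
      have := Real.mul_le_sin hθ0.le (by linarith [Real.pi_gt_three])
      have hpi : 1 / 2 < 2 / π := by
        rw [div_lt_div_iff₀ two_pos Real.pi_pos]; linarith [Real.pi_lt_four]
      nlinarith
    have hsq : ‖1 - exp ζ‖ ^ 2 = 1 - 2 * (exp ζ).re + ‖exp ζ‖ ^ 2 := by
      simp only [← normSq_eq_norm_sq, normSq_apply, sub_re, sub_im, one_re, one_im]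
      ring
    rw [mem_ball_zero_iff, ← sq_lt_one_iff₀ (norm_nonneg _), hsq, hre, hnorm]
    nlinarith
  exact ⟨exp ζ, hmem, hnorm, hre, him,
    log_exp (by rw [hζ]; linarith [Real.pi_pos]) (by rw [hζ]; linarith [Real.pi_gt_three])⟩

variable {γ C : ℝ} {h : ℂ → ℂ}

lemma exists_pi_div_two_lt_im_neg_log_add (hγ : 0 < γ)
    (hh : ∀ z ∈ ball (0 : ℂ) 1, |(h z).im| ≤ C * ‖1 - z‖) :
    ∃ z ∈ ball (0 : ℂ) 1,
      π / 2 < (-log (1 - z) + (γ * ((1 - z) * log (1 - z)) + h z)).im := by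
  have hgain : Tendsto (fun θ : ℝ ↦ Real.sin θ * (θ - π / 2) + Real.cos θ * -Real.log θ)
      (𝓝[>] 0) atTop := by
    have hbdd : Tendsto (fun θ : ℝ ↦ Real.sin θ * (θ - π / 2)) (𝓝[>] 0) (𝓝 0) := by
      have hcont : Continuous fun θ : ℝ ↦ Real.sin θ * (θ - π / 2) := by fun_prop
      simpa using (hcont.tendsto 0).mono_left nhdsWithin_le_nhds
    have hcos : Tendsto Real.cos (𝓝[>] 0) (𝓝 1) := by
      simpa using (Real.continuous_cos.tendsto 0).mono_left nhdsWithin_le_nhds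
    exact hbdd.add_atTop (hcos.pos_mul_atTop one_pos
      (tendsto_neg_atBot_atTop.comp Real.tendsto_log_nhdsGT_zero))
  obtain ⟨θ, hθ, hθ0, hθ1⟩ := ((hgain.const_mul_atTop hγ).eventually_gt_atTop (1 + C)
    |>.and (Ioo_mem_nhdsGT one_pos)).exists
  obtain ⟨w, hw, hnorm, hre, him, hlog⟩ := exists_log_eq_of_tangential hθ0 hθ1
  refine ⟨1 - w, hw, ?_⟩
  have hhw := (abs_le.1 (hh _ hw)).1
  rw [sub_sub_cancel] at hhw ⊢
  simp only [add_im, neg_im, mul_im, ofReal_re, ofReal_im, hlog, hre, him]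
  rw [hnorm] at hhw
  nlinarith [mul_lt_mul_of_pos_left hθ hθ0]

lemma norm_one_sub_le_two {z : ℂ} (hz : z ∈ ball (0 : ℂ) 1) : ‖1 - z‖ ≤ 2 := by
  have := norm_sub_le 1 z
  rw [norm_one] at this
  linarith [mem_ball_zero_iff.1 hz]

lemma not_convex_image_neg_log_add {r : ℝ} (hγ : 0 < γ)
    (hh : ∀ z ∈ ball (0 : ℂ) 1, ‖h z - r‖ ≤ C * ‖1 - z‖) :
    ¬ Convex ℝ ((fun z ↦ -log (1 - z) + (γ * ((1 - z) * log (1 - z)) + h z)) ''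
      ball (0 : ℂ) 1) := by
  intro hconv
  obtain ⟨B, hB⟩ := exists_norm_mul_log_le_of_norm_le 2
  have hbdd : ∀ z ∈ ball (0 : ℂ) 1,
      ‖γ * ((1 - z) * log (1 - z)) + h z‖ ≤ γ * B + (|C| * 2 + |r|) := fun z hz ↦ by
    have hz2 := norm_one_sub_le_two hz
    have hhz : ‖h z - r‖ ≤ |C| * 2 := (hh z hz).trans (by gcongr; exact le_abs_self C)
    calc ‖γ * ((1 - z) * log (1 - z)) + h z‖
        ≤ ‖(γ : ℂ) * ((1 - z) * log (1 - z))‖ + (‖h z - r‖ + ‖(r : ℂ)‖) :=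
          (norm_add_le _ _).trans (by gcongr; exact norm_le_norm_sub_add _ _)
      _ ≤ γ * B + (|C| * 2 + |r|) := by
          rw [norm_mul, norm_real, norm_real, Real.norm_of_nonneg hγ.le, Real.norm_eq_abs]
          gcongr
          exact hB _ hz2
  have hsub : Tendsto (fun z : ℂ ↦ 1 - z) (𝓝[ball 0 1] 1) (𝓝 0) := by
    have hcont : Continuous fun z : ℂ ↦ 1 - z := by fun_prop
    simpa using (hcont.tendsto 1).mono_left nhdsWithin_le_nhds
  have hh_lim : Tendsto h (𝓝[ball 0 1] 1) (𝓝 r) := by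
    rw [← tendsto_sub_nhds_zero_iff]
    exact squeeze_zero_norm' (eventually_nhdsWithin_of_forall hh)
      (by simpa using hsub.norm.const_mul C)
  have hlim : Tendsto (fun z ↦ γ * ((1 - z) * log (1 - z)) + h z) (𝓝[ball 0 1] 1) (𝓝 r) := by
    simpa using ((tendsto_mul_log_nhds_zero.comp hsub).const_mul (γ : ℂ)).add hh_lim
  obtain ⟨z, hz, him⟩ := exists_pi_div_two_lt_im_neg_log_add (h := h) (C := C) hγ fun z hz ↦ by
    simpa using (abs_im_le_norm (h z - r)).trans (hh z hz)
  have hle := im_le_of_convex_image_neg_log_add hbdd hlim hconv hz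
  rw [ofReal_im, add_zero] at hle
  exact hle.not_gt him

end NonconvexImage

theorem stmt_18_general (a b : ℝ) (ha : ∀ n : ℕ, a ≠ -(n : ℝ)) (hb : ∀ n : ℕ, b ≠ -(n : ℝ))
    (hab : ∀ n : ℕ, a + b ≠ -(n : ℝ)) (h : a * b < 1) :
    ¬ Convex ℝ ((fun z : ℂ => z * hyperF a b (a + b) z) '' Metric.ball (0 : ℂ) 1) := by
  intro hconv
  obtain ⟨L, C, r, e, hL, he, hexpand⟩ := exists_mul_hyperF_add_eq_log_expansion ha hb hab
  refine not_convex_image_neg_log_add (sub_pos.2 h) he ?_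
  have hscaled := hconv.smul L⁻¹
  rw [← image_smul, image_image] at hscaled
  refine image_congr (fun z hz ↦ ?_) ▸ hscaled
  rw [hexpand z hz, real_smul, ofReal_inv, inv_mul_cancel_left₀ (ofReal_ne_zero.2 hL)]

theorem stmt_18 (a b : ℝ)
    (ha : ∀ n : ℕ, a ≠ -(n : ℝ)) (hb : ∀ n : ℕ, b ≠ -(n : ℝ))
    (hab : ∀ n : ℕ, a + b ≠ -(n : ℝ)) (h : a * b < 1) :
    ¬ (Set.InjOn (fun z : ℂ => z * hyperF a b (a + b) z) (Metric.ball (0 : ℂ) 1) ∧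
       Convex ℝ ((fun z : ℂ => z * hyperF a b (a + b) z) '' Metric.ball (0 : ℂ) 1)) :=
  fun hconvex ↦ stmt_18_general a b ha hb hab h hconvex.2
end

section
/- Let b and c be real constants with 0 < b ≤ c, and assume that either (1) b ≤ 4 and c ≥ 2, or (2) 1 ≤ c < min{2, 1+b} and c ≥ 3 − b. Then the function f(z) = z F(1,b;c;z) is injective on 𝔻 and its image f(𝔻) is a convex subset of ℂ. -/
open Complex Filter MeasureTheory Metric Set

/-!
For `0 < b ≤ c` the Taylor coefficients of `F(1, b; c; z)` are the moments of a probability measure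
`μ` on `(0, 1]` (a beta distribution, or the Dirac mass at `1` when `b = c`), so that
`f z = z F(1, b; c; z) = ∫ z / (1 - t z) dμ(t)`. The difference quotient of `f` at `z, w` is
`∫ 1 / ((1 - t z) (1 - t w)) dμ(t)`, whose integrand stays in a fixed open half-plane; hence `f` is
injective and `f'` has no zeros.

The derivative `f'` solves the hypergeometric equation with parameters `2, b; c`, so the quotient
`w = z f'' / f'` solves a Riccati equation. At the first point where `re w = -a / 2`, with
`a ≤ 2` one of the two numerator parameters, Jack's lemma makes `a z w' / (w (w + a))` a real number
`≥ 1`, and taking absolute values in the Riccati equation yields a contradiction. Therefore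
`re (1 + z f'' / f') > 0`.

To pass from this inequality to convexity, join the images of two points of the disc of radius `ρ`
by a segment that grows from the constant path `f 0`. It cannot leave the image of that disc: pulled
back to the disc, a segment touching the boundary circle would give a path whose modulus has an
interior maximum, where the inequality makes the second derivative of the squared modulus positive.
-/

open scoped Topology ComplexConjugate unitInterval

section Jack

lemma hasDerivAt_nonpos_of_eventually_le_nhdsGT {g : ℝ → ℝ} {g' a : ℝ} (hg : HasDerivAt g g' a)
    (h : ∀ᶠ t in 𝓝[>] a, g t ≤ g a) : g' ≤ 0 := by
  refine le_of_tendsto (hasDerivAt_iff_tendsto_slope_left_right.1 hg).2 ?_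
  filter_upwards [h, self_mem_nhdsWithin] with t hle hlt
  rw [slope_def_field]
  exact div_nonpos_of_nonpos_of_nonneg (sub_nonpos.2 hle) (sub_nonneg.2 (mem_Ioi.1 hlt).le)

lemma re_nonneg_and_im_eq_zero_of_forall_mul_re_nonneg {m : ℂ}
    (h : ∀ ζ : ℂ, 0 < ζ.re → 0 ≤ (m * ζ).re) : 0 ≤ m.re ∧ m.im = 0 := by
  refine ⟨by simpa using h 1, ?_⟩
  by_contra him
  have hneg := h ⟨1, (m.re + 1) / m.im⟩ (by simp)
  rw [mul_re, mul_one, mul_div_cancel₀ _ him] at hneg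
  linarith

lemma eventually_norm_one_sub_mul_lt_one {ζ : ℂ} (hζ : 0 < ζ.re) :
    ∀ᶠ t : ℝ in 𝓝[>] 0, ‖1 - t * ζ‖ < 1 := by
  have hsmall : ∀ᶠ t : ℝ in 𝓝 0, t * normSq ζ < 2 * ζ.re :=
    (by fun_prop : Continuous fun t : ℝ => t * normSq ζ).continuousAt.eventually_lt
      continuousAt_const (by simpa using hζ)
  filter_upwards [hsmall.filter_mono nhdsWithin_le_nhds, self_mem_nhdsWithin] with t ht ht0
  rw [← sq_lt_one_iff₀ (norm_nonneg _), Complex.sq_norm, normSq_apply]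
  have hgap := mul_pos (mem_Ioi.1 ht0) (sub_pos.2 ht)
  simp only [normSq_apply, sub_re, sub_im, one_re, one_im, re_ofReal_mul, im_ofReal_mul] at hgap ⊢
  linarith

variable {φ : ℂ → ℂ} {φ' z₀ : ℂ}

lemma norm_apply_mul_le_of_norm_le (hφ : DifferentiableOn ℂ φ (ball 0 ‖z₀‖)) (hφ0 : φ 0 = 0)
    (hle : ∀ x ∈ ball (0 : ℂ) ‖z₀‖, ‖φ x‖ ≤ ‖φ z₀‖) {η : ℂ} (hη : ‖η‖ < 1) :
    ‖φ (z₀ * η)‖ ≤ ‖φ z₀‖ * ‖η‖ := by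
  rcases eq_or_ne z₀ 0 with rfl | hz₀
  · simp [hφ0]
  have hz₀' : 0 < ‖z₀‖ := norm_pos_iff.2 hz₀
  have hmem : z₀ * η ∈ ball (0 : ℂ) ‖z₀‖ := by
    rw [mem_ball_zero_iff, norm_mul]
    exact mul_lt_of_lt_one_right hz₀' hη
  have hdist := Complex.dist_le_div_mul_dist_of_mapsTo_ball hφ
    (fun x hx => by simpa [hφ0] using hle x hx) hmem
  rw [hφ0, dist_zero_right, dist_zero_right, norm_mul] at hdist
  exact hdist.trans_eq (by field_simp)

lemma mul_deriv_div_sub_one_mul_re_nonneg (hφ : DifferentiableOn ℂ φ (ball 0 ‖z₀‖))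
    (hφ' : HasDerivAt φ φ' z₀) (hφ0 : φ 0 = 0)
    (hle : ∀ x ∈ ball (0 : ℂ) ‖z₀‖, ‖φ x‖ ≤ ‖φ z₀‖) (hne : φ z₀ ≠ 0) {ζ : ℂ} (hζ : 0 < ζ.re) :
    0 ≤ ((z₀ * φ' / φ z₀ - 1) * ζ).re := by
  have hray : HasDerivAt (fun t : ℝ => 1 - t * ζ) (-ζ) 0 := by
    simpa using ((hasDerivAt_id (0 : ℝ)).ofReal_comp.mul_const ζ).const_sub 1
  have hcomp : HasDerivAt (fun t : ℝ => φ (z₀ * (1 - t * ζ))) (φ' * (z₀ * -ζ)) 0 :=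
    HasDerivAt.comp (h₂ := φ) (0 : ℝ) (by simpa using hφ') (hray.const_mul z₀)
  have hderiv := hcomp.norm_sq.sub (hray.norm_sq.const_mul (‖φ z₀‖ ^ 2))
  have hnonpos := hasDerivAt_nonpos_of_eventually_le_nhdsGT hderiv <| by
    filter_upwards [eventually_norm_one_sub_mul_lt_one hζ] with t ht
    have hsq := pow_le_pow_left₀ (norm_nonneg _) (norm_apply_mul_le_of_norm_le hφ hφ0 hle ht) 2
    simp only [Pi.sub_apply, ofReal_zero, zero_mul, sub_zero, mul_one, norm_one, one_pow]
    linarith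
  have hinner : φ' * (z₀ * -ζ) * conj (φ z₀) = (‖φ z₀‖ ^ 2 : ℝ) * -(z₀ * φ' / φ z₀ * ζ) := by
    rw [Complex.sq_norm, ← mul_conj]
    field_simp
  simp only [Complex.inner, ofReal_zero, zero_mul, sub_zero, mul_one, map_one, hinner,
    re_ofReal_mul, neg_re] at hnonpos
  have hpos : 0 < ‖φ z₀‖ ^ 2 := by positivity
  rw [sub_mul, one_mul, sub_re]
  nlinarith

/-- **Jack's lemma**. By the Schwarz lemma `‖φ (z₀ * (1 - t * ζ))‖ ≤ ‖φ z₀‖ * ‖1 - t * ζ‖`, with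
equality at `t = 0`; comparing derivatives there for every `ζ` in the right half-plane gives both
that the quotient is real and that it is at least `1`. -/
theorem exists_one_le_mul_deriv_eq_of_norm_le (hφ : DifferentiableOn ℂ φ (ball 0 ‖z₀‖))
    (hφ' : HasDerivAt φ φ' z₀) (hφ0 : φ 0 = 0)
    (hle : ∀ x ∈ ball (0 : ℂ) ‖z₀‖, ‖φ x‖ ≤ ‖φ z₀‖) (hne : φ z₀ ≠ 0) :
    ∃ k : ℝ, 1 ≤ k ∧ z₀ * φ' = k * φ z₀ := by
  obtain ⟨hre, him⟩ := re_nonneg_and_im_eq_zero_of_forall_mul_re_nonneg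
    fun _ => mul_deriv_div_sub_one_mul_re_nonneg hφ hφ' hφ0 hle hne
  refine ⟨(z₀ * φ' / φ z₀).re, by simpa using hre, ?_⟩
  have hreal : ((z₀ * φ' / φ z₀).re : ℂ) = z₀ * φ' / φ z₀ :=
    Complex.ext (by simp) (by simpa using him.symm)
  rw [hreal, div_mul_cancel₀ _ hne]

end Jack

lemma exists_eq_and_forall_mem_ball_lt {E : Type*} [NormedAddCommGroup E] [NormedSpace ℝ E]
    [ProperSpace E] {u : E → ℝ} {R m : ℝ} (hu : ContinuousOn u (ball 0 R)) (h0 : m < u 0) {y : E}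
    (hy : y ∈ ball (0 : E) R) (hym : u y ≤ m) :
    ∃ z ∈ ball (0 : E) R, u z = m ∧ ∀ x ∈ ball (0 : E) ‖z‖, m < u x := by
  have hsub : closedBall (0 : E) ‖y‖ ⊆ ball 0 R := closedBall_subset_ball (by simpa using hy)
  have hcompact : IsCompact (closedBall (0 : E) ‖y‖ ∩ u ⁻¹' Iic m) :=
    (isCompact_closedBall 0 ‖y‖).of_isClosed_subset
      ((hu.mono hsub).preimage_isClosed_of_isClosed isClosed_closedBall isClosed_Iic)
      inter_subset_left
  obtain ⟨z, ⟨hzy, hzm⟩, hmin⟩ :=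
    hcompact.exists_isMinOn ⟨y, by simp, hym⟩ continuous_norm.continuousOn
  have hlt : ∀ x ∈ ball (0 : E) ‖z‖, m < u x := by
    intro x hx
    by_contra! hxm
    have hxz : ‖x‖ < ‖z‖ := mem_ball_zero_iff.1 hx
    exact hxz.not_ge (hmin ⟨by simpa using hxz.le.trans (mem_closedBall_zero_iff.1 hzy), hxm⟩)
  have hz0 : ‖z‖ ≠ 0 := by
    rw [norm_ne_zero_iff]
    rintro rfl
    exact h0.not_ge hzm
  have hclosure : z ∈ closure (ball (0 : E) ‖z‖) := by
    rw [closure_ball _ hz0]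
    simp
  have hzR := hsub hzy
  have hge : m ≤ u z := ContinuousWithinAt.closure_le hclosure continuousWithinAt_const
    (hu.continuousAt (isOpen_ball.mem_nhds hzR)).continuousWithinAt fun x hx => (hlt x hx).le
  exact ⟨z, hzR, le_antisymm hzm hge, hlt⟩

lemma norm_le_norm_add_ofReal_iff {w : ℂ} {A : ℝ} (hA : 0 < A) :
    ‖w‖ ≤ ‖w + A‖ ↔ -(A / 2) ≤ w.re := by
  rw [← sq_le_sq₀ (norm_nonneg _) (norm_nonneg _), Complex.sq_norm, Complex.sq_norm,
    normSq_apply, normSq_apply, add_re, add_im, ofReal_re, ofReal_im, add_zero]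
  constructor <;> intro h <;> nlinarith

lemma add_ofReal_eq_neg_conj {w : ℂ} {A : ℝ} (hw : w.re = -(A / 2)) : w + A = -conj w := by
  refine Complex.ext ?_ (by simp)
  rw [add_re, ofReal_re, neg_re, conj_re, hw]
  ring

/-- Jack's lemma for `w / (w + A)`, which maps the disc into the disc as long as `-(A / 2) < re w`,
at the first point where this inequality fails. -/
theorem exists_re_eq_and_mul_deriv_eq_of_re_le {w : ℂ → ℂ} {R A : ℝ}
    (hw : DifferentiableOn ℂ w (ball 0 R)) (hw0 : w 0 = 0) (hA : 0 < A)
    {y : ℂ} (hy : y ∈ ball (0 : ℂ) R) (hwy : (w y).re ≤ -(A / 2)) :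
    ∃ z ∈ ball (0 : ℂ) R, (w z).re = -(A / 2) ∧
      ∃ k : ℝ, 1 ≤ k ∧ A * (z * deriv w z) = k * (w z * (w z + A)) := by
  obtain ⟨z, hz, hzre, hlt⟩ := exists_eq_and_forall_mem_ball_lt
    (continuous_re.comp_continuousOn hw.continuousOn) (by simpa [hw0] using hA) hy hwy
  simp only [Function.comp_apply] at hzre hlt
  have hne : ∀ {x : ℂ}, -(A / 2) ≤ (w x).re → w x + A ≠ 0 := by
    intro x hx h
    have hre := congrArg re h
    simp only [add_re, ofReal_re, zero_re] at hre
    linarith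
  have hball : ball (0 : ℂ) ‖z‖ ⊆ ball 0 R := ball_subset_ball (mem_ball_zero_iff.1 hz).le
  have hnorm_one : ‖w z / (w z + A)‖ = 1 := by
    rw [norm_div, add_ofReal_eq_neg_conj hzre, norm_neg, norm_conj, div_self]
    rw [norm_ne_zero_iff]
    intro h
    simp [h, hA.ne'] at hzre
  have hderiv : HasDerivAt w (deriv w z) z :=
    (hw.differentiableAt (isOpen_ball.mem_nhds hz)).hasDerivAt
  obtain ⟨k, hk, hjack⟩ := exists_one_le_mul_deriv_eq_of_norm_le (φ := fun x => w x / (w x + A))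
    ((hw.mono hball).div ((hw.mono hball).add_const _) fun x hx => hne (hlt x hx).le)
    (hderiv.fun_div (hderiv.add_const _) (hne hzre.ge)) (by simp [hw0])
    (fun x hx => by
      rw [hnorm_one, norm_div]
      exact div_le_one_of_le₀ ((norm_le_norm_add_ofReal_iff hA).2 (hlt x hx).le) (norm_nonneg _))
    (norm_ne_zero_iff.1 (by rw [hnorm_one]; exact one_ne_zero))
  refine ⟨z, hz, hzre, k, hk, ?_⟩
  have hzne := hne hzre.ge
  field_simp at hjack
  linear_combination hjack


section Riccati

variable {a b c : ℝ}

lemma norm_le_norm_and_ne_zero_of_re_eq {k : ℝ} {w : ℂ} (ha : 0 < a) (hk : 1 ≤ k)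
    (hw : w.re = -(a / 2)) (hac : a + 1 ≤ c + b) (hbc : b ≤ c) (hne : a + 1 < c + b ∨ b < c) :
    ‖k * w + a * (w + b)‖ ≤ ‖k * (w + a) + a * (w + (c - 1))‖ ∧
      k * (w + a) + a * (w + (c - 1)) ≠ 0 := by
  set M : ℂ := k * w + a * (w + b) with hM
  set N : ℂ := k * (w + a) + a * (w + (c - 1)) with hN
  have hMre : M.re = a / 2 * (2 * b - k - a) := by
    simp only [hM, add_re, re_ofReal_mul, ofReal_re, hw]
    ring
  have hNre : N.re = a / 2 * (k + 2 * (c - 1) - a) := by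
    simp only [hN, add_re, sub_re, one_re, re_ofReal_mul, ofReal_re, hw]
    ring
  have him : M.im = N.im := by simp [hM, hN]
  have hdiff : ‖N‖ ^ 2 - ‖M‖ ^ 2 = a ^ 2 * ((c + b - (a + 1)) * (k + c - 1 - b)) := by
    rw [Complex.sq_norm, Complex.sq_norm, normSq_apply, normSq_apply, hMre, hNre, him]
    ring
  have hgap : 0 ≤ a ^ 2 * ((c + b - (a + 1)) * (k + c - 1 - b)) :=
    mul_nonneg (sq_nonneg a) (mul_nonneg (by linarith) (by linarith))
  have hle : ‖M‖ ≤ ‖N‖ := (sq_le_sq₀ (norm_nonneg _) (norm_nonneg _)).1 (by linarith)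
  refine ⟨hle, fun hN0 => ?_⟩
  have hM0 : M = 0 := by simpa [hN0] using hle
  have ha2 : a / 2 ≠ 0 := by positivity
  have hMre0 : 2 * b - k - a = 0 := by simpa [hM0, ha2, eq_comm] using hMre
  have hNre0 : k + 2 * (c - 1) - a = 0 := by simpa [hN0, ha2, eq_comm] using hNre
  rcases hne with h | h <;> linarith

theorem re_gt_of_riccati {w : ℂ → ℂ} (hw : DifferentiableOn ℂ w (ball 0 1)) (hw0 : w 0 = 0)
    (ha : 0 < a) (hac : a + 1 ≤ c + b) (hbc : b ≤ c) (hne : a + 1 < c + b ∨ b < c)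
    (hode : ∀ z ∈ ball (0 : ℂ) 1, (1 - z) * (z * deriv w z) + w z * (w z + (c - 1)) =
      z * (w z + a) * (w z + b)) {z : ℂ} (hz : z ∈ ball (0 : ℂ) 1) :
    -(a / 2) < (w z).re := by
  by_contra! hle
  obtain ⟨x, hx, hre, k, hk, hjack⟩ := exists_re_eq_and_mul_deriv_eq_of_re_le hw hw0 ha hz hle
  obtain ⟨hnorm, hne0⟩ := norm_le_norm_and_ne_zero_of_re_eq ha hk hre hac hbc hne
  set M : ℂ := k * w x + a * (w x + b)
  set N : ℂ := k * (w x + a) + a * (w x + (c - 1))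
  have hprod : w x * N = x * (w x + a) * M := by
    linear_combination a * hode x hx - (1 - x) * hjack
  have hreflect : w x + a = -conj (w x) := add_ofReal_eq_neg_conj hre
  have hwx : ‖w x‖ ≠ 0 := by
    rw [norm_ne_zero_iff]
    intro h0
    simp [h0, ha.ne'] at hre
  have hNM : ‖N‖ = ‖x‖ * ‖M‖ := by
    have := congrArg norm hprod
    rw [norm_mul, norm_mul, norm_mul, hreflect, norm_neg, norm_conj] at this
    exact mul_left_cancel₀ hwx (by rw [this]; ring)
  have hlt : ‖x‖ * ‖N‖ < ‖N‖ :=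
    mul_lt_of_lt_one_left (norm_pos_iff.2 hne0) (mem_ball_zero_iff.1 hx)
  exact hlt.not_ge (hNM.trans_le (mul_le_mul_of_nonneg_left hnorm (norm_nonneg x)))

theorem mul_deriv_div_re_gt_of_hypergeometric_ode {y : ℂ → ℂ}
    (hy : DifferentiableOn ℂ y (ball 0 1)) (hy0 : ∀ z ∈ ball (0 : ℂ) 1, y z ≠ 0)
    (ha : 0 < a) (hac : a + 1 ≤ c + b) (hbc : b ≤ c) (hne : a + 1 < c + b ∨ b < c)
    (hode : ∀ z ∈ ball (0 : ℂ) 1,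
      z * (1 - z) * deriv (deriv y) z + (c - (a + b + 1) * z) * deriv y z = a * b * y z)
    {z : ℂ} (hz : z ∈ ball (0 : ℂ) 1) : -(a / 2) < (z * deriv y z / y z).re := by
  have hy' : DifferentiableOn ℂ (deriv y) (ball 0 1) := hy.deriv isOpen_ball
  refine re_gt_of_riccati (w := fun z => z * deriv y z / y z)
    ((differentiableOn_id.mul hy').div hy hy0) (by simp) ha hac hbc hne (fun x hx => ?_) hz
  have hnhds := isOpen_ball.mem_nhds hx
  have hx0 := hy0 x hx
  have hd : HasDerivAt (fun z => z * deriv y z / y z) _ x :=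
    ((hasDerivAt_id x).mul (hy'.differentiableAt hnhds).hasDerivAt).fun_div
      (hy.differentiableAt hnhds).hasDerivAt hx0
  simp only [hd.deriv, Pi.mul_apply, id]
  field_simp
  linear_combination x * y x * hode x hx

lemma deriv_first_order_ode {y g : ℂ → ℂ} {U : Set ℂ} (hU : IsOpen U)
    (hy : DifferentiableOn ℂ y U) {p q : ℂ}
    (hode : ∀ z ∈ U, z * (1 - z) * deriv y z + (p - q * z) * y z = g z) {z : ℂ} (hz : z ∈ U) :
    z * (1 - z) * deriv (deriv y) z + (p + 1 - (q + 2) * z) * deriv y z = q * y z + deriv g z := by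
  have hz' := hU.mem_nhds hz
  have hd := (hy.differentiableAt hz').hasDerivAt
  have hdd := ((hy.deriv hU).differentiableAt hz').hasDerivAt
  have hlhs : HasDerivAt (fun z => z * (1 - z) * deriv y z + (p - q * z) * y z) _ z :=
    (((hasDerivAt_id z).mul ((hasDerivAt_id z).const_sub 1)).mul hdd).add
      ((((hasDerivAt_id z).const_mul q).const_sub p).mul hd)
  have hrhs : g =ᶠ[𝓝 z] fun z => z * (1 - z) * deriv y z + (p - q * z) * y z := by
    filter_upwards [hz'] with x hx using (hode x hx).symm
  rw [hrhs.deriv_eq, hlhs.deriv]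
  simp only [Pi.mul_apply, id]
  ring

/-- Differentiated twice, the equation for `f` becomes the hypergeometric equation with parameters
`2, b; c` for `deriv f`. -/
lemma hypergeometric_ode_deriv {f : ℂ → ℂ} {U : Set ℂ} (hU : IsOpen U)
    (hf : DifferentiableOn ℂ f U) {b c : ℂ}
    (hode : ∀ z ∈ U, z * (1 - z) * deriv f z + (c - 2 - (b - 1) * z) * f z = (c - 1) * z)
    {z : ℂ} (hz : z ∈ U) :
    z * (1 - z) * deriv (deriv (deriv f)) z + (c - (b + 3) * z) * deriv (deriv f) z =
      2 * b * deriv f z := by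
  have hfirst : ∀ z ∈ U, z * (1 - z) * deriv (deriv f) z + (c - 1 - (b + 1) * z) * deriv f z =
      (b - 1) * f z + (c - 1) := by
    intro z hz
    have h := deriv_first_order_ode hU hf hode hz
    rw [deriv_const_mul_field, deriv_id''] at h
    linear_combination h
  have h := deriv_first_order_ode hU (hf.deriv hU) hfirst hz
  rw [deriv_add_const, deriv_const_mul_field] at h
  linear_combination h

end Riccati

section Convex

lemma deriv_deriv_nonpos_of_isLocalMax {φ : ℝ → ℝ} {t : ℝ} (hmax : IsLocalMax φ t)
    (hφ : ContinuousAt φ t) : deriv (deriv φ) t ≤ 0 := by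
  by_contra! hpos
  have hmin := isLocalMin_of_deriv_deriv_pos hpos hmax.deriv_eq_zero hφ
  have hconst : φ =ᶠ[𝓝 t] fun _ => φ t := by
    filter_upwards [hmax, hmin] with s hle hge using le_antisymm hle hge
  simp [hconst.deriv.deriv_eq] at hpos

/-- Here `‖γ‖ ^ 2` has second derivative `2 * ‖γ'‖ ^ 2 * re (1 + γ * h' / h)` at a critical point,
because `conj γ * γ'` is purely imaginary there. -/
lemma not_isLocalMax_norm_sq_of_hasDerivAt_div {h : ℂ → ℂ} {γ : ℝ → ℂ} {v h' : ℂ} {t : ℝ}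
    (hγ : ∀ᶠ s in 𝓝 t, HasDerivAt γ (v / h (γ s)) s) (hh : HasDerivAt h h' (γ t)) (hv : v ≠ 0)
    (hne : h (γ t) ≠ 0) (hre : 0 < (1 + γ t * h' / h (γ t)).re) :
    ¬ IsLocalMax (fun s => ‖γ s‖ ^ 2) t := by
  intro hmax
  have hγt : HasDerivAt γ (v / h (γ t)) t := hγ.self_of_nhds
  set q : ℂ := v / h (γ t) with hq
  have hderiv : deriv (fun s => ‖γ s‖ ^ 2) =ᶠ[𝓝 t]
      fun s => 2 * (conj (γ s) * (v / h (γ s))).re := by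
    filter_upwards [hγ] with s hs
    rw [hs.norm_sq.deriv, Complex.inner, mul_comm (conj _)]
  have hq' : HasDerivAt (fun s => v / h (γ s)) (-(q ^ 2 * (h' / h (γ t)))) t := by
    refine ((hasDerivAt_const t v).fun_div (hh.comp t hγt) hne).congr_deriv ?_
    rw [hq, Function.comp_apply]
    field_simp
    ring
  have hderiv₂ : HasDerivAt (fun s => 2 * (conj (γ s) * (v / h (γ s))).re)
      (2 * (conj q * q + conj (γ t) * -(q ^ 2 * (h' / h (γ t)))).re) t :=
    (reCLM.hasFDerivAt.comp_hasDerivAt t (hγt.star.mul hq')).const_mul 2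
  have hcrit : (conj (γ t) * q).re = 0 := by
    simpa [hderiv.self_of_nhds] using hmax.deriv_eq_zero
  have himag : conj (γ t) * q = -(γ t * conj q) := by
    have := add_conj (conj (γ t) * q)
    rw [hcrit, mul_zero, ofReal_zero, map_mul, conj_conj] at this
    linear_combination this
  have hsecond := deriv_deriv_nonpos_of_isLocalMax hmax hγt.norm_sq.continuousAt
  have hfactor : conj q * q + conj (γ t) * -(q ^ 2 * (h' / h (γ t))) =
      (normSq q : ℂ) * (1 + γ t * h' / h (γ t)) := by
    rw [← mul_conj, mul_div_assoc]
    linear_combination -q * (h' / h (γ t)) * himag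
  rw [hderiv.deriv_eq, hderiv₂.deriv, hfactor, re_ofReal_mul] at hsecond
  have hqpos : 0 < normSq q := normSq_pos.2 (div_ne_zero hv hne)
  nlinarith [mul_pos hqpos hre]

variable {f : ℂ → ℂ}

lemma hasDerivAt_invFunOn {U : Set ℂ} (hU : IsOpen U) (hf : DifferentiableOn ℂ f U)
    (hinj : InjOn f U) {z : ℂ} (hz : z ∈ U) (hne : deriv f z ≠ 0) :
    HasDerivAt (Function.invFunOn f U) (deriv f z)⁻¹ (f z) := by
  have hstrict : HasStrictDerivAt f (deriv f z) z := (hf.analyticOnNhd hU z hz).hasStrictDerivAt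
  refine (hstrict.to_local_left_inverse hne ?_).hasDerivAt
  filter_upwards [hU.mem_nhds hz] with x hx using hinj.leftInvOn_invFunOn hx

lemma isOpen_image_of_deriv_ne_zero {U : Set ℂ} (hU : IsOpen U) (hf : DifferentiableOn ℂ f U)
    (hne : ∀ z ∈ U, deriv f z ≠ 0) : IsOpen (f '' U) := by
  rw [isOpen_iff_mem_nhds]
  rintro _ ⟨z, hz, rfl⟩
  rw [← (hf.analyticOnNhd hU z hz).hasStrictDerivAt.map_nhds_eq (hne z hz)]
  exact image_mem_map (hU.mem_nhds hz)

lemma forall_mem_of_forall_forall_mem_closed {S K Y : Type*} [TopologicalSpace S]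
    [TopologicalSpace K] [TopologicalSpace Y] [PreconnectedSpace S] [CompactSpace K]
    {Γ : S → K → Y} (hΓ : Continuous (Function.uncurry Γ)) {U C : Set Y} (hU : IsOpen U)
    (hC : IsClosed C) (hUC : U ⊆ C) (himp : ∀ s, (∀ k, Γ s k ∈ C) → ∀ k, Γ s k ∈ U) {s₀ : S}
    (hs₀ : ∀ k, Γ s₀ k ∈ U) (s : S) (k : K) : Γ s k ∈ U := by
  have hopen : IsOpen {s | ∀ k, Γ s k ∈ U} := by
    rw [isOpen_iff_eventually]
    intro s hs
    have := isCompact_univ.eventually_forall_of_forall_eventually (x₀ := s)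
      (P := fun s k => Γ s k ∈ U) fun k (_ : k ∈ univ) => hΓ.continuousAt (hU.mem_nhds (hs k))
    simpa using this
  have hclosed : IsClosed {s | ∀ k, Γ s k ∈ U} := by
    have heq : {s | ∀ k, Γ s k ∈ U} = ⋂ k, (Γ · k) ⁻¹' C := by
      ext s
      simpa using ⟨fun hs k => hUC (hs k), himp s⟩
    rw [heq]
    exact isClosed_iInter fun k => hC.preimage (by fun_prop)
  have huniv := IsClopen.eq_univ ⟨hclosed, hopen⟩ ⟨s₀, hs₀⟩
  exact (huniv.ge (mem_univ s) : ∀ k, Γ s k ∈ U) k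

lemma exists_curve_of_forall_lineMap_mem_image {U K : Set ℂ} (hU : IsOpen U) (hKU : K ⊆ U)
    (hf : DifferentiableOn ℂ f U) (hinj : InjOn f U) (hne : ∀ z ∈ U, deriv f z ≠ 0) {p q : ℂ}
    (hseg : ∀ t ∈ Icc (0 : ℝ) 1, AffineMap.lineMap p q t ∈ f '' K) :
    ∃ γ : ℝ → ℂ, ∀ t ∈ Icc (0 : ℝ) 1, γ t ∈ K ∧ f (γ t) = AffineMap.lineMap p q t ∧
      HasDerivAt γ ((q - p) / deriv f (γ t)) t := by
  refine ⟨fun t => Function.invFunOn f U (AffineMap.lineMap p q t), fun t ht => ?_⟩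
  obtain ⟨z, hz, hzt⟩ := hseg t ht
  have hinv := hasDerivAt_invFunOn hU hf hinj (hKU hz) (hne z (hKU hz))
  simp only [← hzt, hinj.leftInvOn_invFunOn (hKU hz), div_eq_inv_mul]
  rw [hzt] at hinv
  exact ⟨hz, trivial, hinv.comp t AffineMap.hasDerivAt_lineMap⟩

lemma lineMap_mem_image_ball_of_forall_mem_image_closedBall {R : ℝ}
    (hf : DifferentiableOn ℂ f (ball 0 R)) (hinj : InjOn f (ball 0 R))
    (hne : ∀ z ∈ ball (0 : ℂ) R, deriv f z ≠ 0)
    (hre : ∀ z ∈ ball (0 : ℂ) R, 0 < (1 + z * deriv (deriv f) z / deriv f z).re)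
    {ρ : ℝ} (hρ : ρ < R) {x y : ℂ} (hx : x ∈ ball 0 ρ) (hy : y ∈ ball 0 ρ)
    (hseg : ∀ t ∈ Icc (0 : ℝ) 1, AffineMap.lineMap (f x) (f y) t ∈ f '' closedBall 0 ρ)
    {t : ℝ} (ht : t ∈ Icc (0 : ℝ) 1) : AffineMap.lineMap (f x) (f y) t ∈ f '' ball 0 ρ := by
  rcases eq_or_ne (f x) (f y) with hxy | hxy
  · exact ⟨x, hx, by simp [hxy]⟩
  have hsub : closedBall (0 : ℂ) ρ ⊆ ball 0 R := closedBall_subset_ball hρ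
  obtain ⟨γ, hγ⟩ := exists_curve_of_forall_lineMap_mem_image isOpen_ball hsub hf hinj hne hseg
  have hend {u : ℂ} (hu : u ∈ ball 0 ρ) {s : ℝ} (hs : s ∈ Icc (0 : ℝ) 1) (hfs : f (γ s) = f u) :
      ‖γ s‖ < ρ := by
    rw [hinj (hsub (hγ s hs).1) (hsub (ball_subset_closedBall hu)) hfs]
    exact mem_ball_zero_iff.1 hu
  obtain ⟨t₀, ht₀, hmax⟩ := isCompact_Icc.exists_isMaxOn (nonempty_Icc.2 zero_le_one)
    fun t ht => (hγ t ht).2.2.norm_sq.continuousAt.continuousWithinAt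
  have hlt : ‖γ t₀‖ < ρ := by
    obtain ⟨hmem, hfγ, -⟩ := hγ t₀ ht₀
    rcases eq_endpoints_or_mem_Ioo_of_mem_Icc ht₀ with rfl | rfl | hIoo
    · exact hend hx ht₀ (by simp [hfγ])
    · exact hend hy ht₀ (by simp [hfγ])
    · have hnhds : Icc (0 : ℝ) 1 ∈ 𝓝 t₀ := Icc_mem_nhds hIoo.1 hIoo.2
      refine absurd (hmax.isLocalMax hnhds) (not_isLocalMax_norm_sq_of_hasDerivAt_div
        (h := deriv f) ?_ ?_ (sub_ne_zero.2 hxy.symm) (hne _ (hsub hmem)) (hre _ (hsub hmem)))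
      · filter_upwards [hnhds] with s hs using (hγ s hs).2.2
      · exact ((hf.deriv isOpen_ball).differentiableAt
          (isOpen_ball.mem_nhds (hsub hmem))).hasDerivAt
  refine ⟨γ t, ?_, (hγ t ht).2.1⟩
  rw [mem_ball_zero_iff]
  exact (le_of_sq_le_sq (hmax ht) (norm_nonneg _)).trans_lt hlt

theorem convex_image_ball_of_one_add_mul_deriv_div_re_pos {R : ℝ}
    (hf : DifferentiableOn ℂ f (ball 0 R)) (hinj : InjOn f (ball 0 R))
    (hne : ∀ z ∈ ball (0 : ℂ) R, deriv f z ≠ 0)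
    (hre : ∀ z ∈ ball (0 : ℂ) R, 0 < (1 + z * deriv (deriv f) z / deriv f z).re) :
    Convex ℝ (f '' ball 0 R) := by
  rw [convex_iff_segment_subset]
  rintro _ ⟨x, hx, rfl⟩ _ ⟨y, hy, rfl⟩
  obtain ⟨ρ, hρ, hρR⟩ : ∃ ρ, max ‖x‖ ‖y‖ < ρ ∧ ρ < R :=
    exists_between (max_lt (by simpa using hx) (by simpa using hy))
  obtain ⟨hxρ, hyρ⟩ := max_lt_iff.1 hρ
  have hcb : closedBall (0 : ℂ) ρ ⊆ ball 0 R := closedBall_subset_ball hρR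
  have hbb : ball (0 : ℂ) ρ ⊆ ball 0 R := ball_subset_ball hρR.le
  have hscale {u : ℂ} (hu : ‖u‖ < ρ) (s : I) : (s : ℝ) • u ∈ ball (0 : ℂ) ρ := by
    rw [mem_ball_zero_iff, norm_smul, Real.norm_of_nonneg s.2.1]
    exact (mul_le_of_le_one_left (norm_nonneg u) s.2.2).trans_lt hu
  have hcont {u : ℂ} (hu : ‖u‖ < ρ) : Continuous fun s : I => f ((s : ℝ) • u) :=
    hf.continuousOn.comp_continuous (by fun_prop) fun s => hbb (hscale hu s)
  have hmem := forall_mem_of_forall_forall_mem_closed (S := I) (K := I)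
    (Γ := fun s t => AffineMap.lineMap (f ((s : ℝ) • x)) (f ((s : ℝ) • y)) (t : ℝ))
    (U := f '' ball 0 ρ) (C := f '' closedBall 0 ρ) (s₀ := 0)
    (((hcont hxρ).comp continuous_fst).lineMap ((hcont hyρ).comp continuous_fst) (by fun_prop))
    (isOpen_image_of_deriv_ne_zero isOpen_ball (hf.mono hbb) fun z hz => hne z (hbb hz))
    ((isCompact_closedBall 0 ρ).image_of_continuousOn (hf.continuousOn.mono hcb)).isClosed
    (image_mono ball_subset_closedBall)
    (fun s hs t => lineMap_mem_image_ball_of_forall_mem_image_closedBall hf hinj hne hre hρR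
      (hscale hxρ s) (hscale hyρ s) (fun t ht => hs ⟨t, ht⟩) t.2)
    (fun t => ⟨0, by simpa using (norm_nonneg x).trans_lt hxρ, by simp⟩) 1
  rw [segment_eq_image_lineMap]
  rintro _ ⟨t, ht, rfl⟩
  simpa using image_mono hbb (hmem ⟨t, ht⟩)

end Convex

section Stieltjes

lemma min_one_le_norm_one_sub_mul {z : ℂ} {t : ℝ} (ht : t ∈ Icc (0 : ℝ) 1) :
    min 1 (1 - z.re) ≤ ‖1 - t * z‖ := by
  have hre : (1 - t * z).re = (1 - t) * 1 + t * (1 - z.re) := by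
    simp only [sub_re, one_re, re_ofReal_mul]
    ring
  calc min 1 (1 - z.re)
      = (1 - t) * min 1 (1 - z.re) + t * min 1 (1 - z.re) := by ring
    _ ≤ (1 - t) * 1 + t * (1 - z.re) :=
        add_le_add (mul_le_mul_of_nonneg_left (min_le_left _ _) (sub_nonneg.2 ht.2))
          (mul_le_mul_of_nonneg_left (min_le_right _ _) ht.1)
    _ ≤ ‖1 - t * z‖ := hre.ge.trans (re_le_norm _)

lemma one_sub_mul_ne_zero {z : ℂ} (hz : z.re < 1) {t : ℝ} (ht : t ∈ Icc (0 : ℝ) 1) :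
    1 - t * z ≠ 0 :=
  norm_pos_iff.1 ((lt_min one_pos (sub_pos.2 hz)).trans_le (min_one_le_norm_one_sub_mul ht))

lemma norm_inv_one_sub_mul_le {z : ℂ} {r : ℝ} (hr : r < 1) (hz : z.re ≤ r) {t : ℝ}
    (ht : t ∈ Icc (0 : ℝ) 1) : ‖(1 - t * z)⁻¹‖ ≤ (min 1 (1 - r))⁻¹ := by
  rw [norm_inv]
  refine inv_anti₀ (lt_min one_pos (sub_pos.2 hr)) (le_trans ?_ (min_one_le_norm_one_sub_mul ht))
  gcongr

lemma exists_forall_mul_inv_re_pos {z w : ℂ} (hz : z.re < 1) (hw : w.re < 1) :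
    ∃ u : ℂ, ∀ t ∈ Ioc (0 : ℝ) 1, 0 < (u * ((1 - t * z)⁻¹ * (1 - t * w)⁻¹)).re := by
  suffices h : ∃ u : ℂ, ∀ t ∈ Ioc (0 : ℝ) 1, 0 < (u * conj ((1 - t * z) * (1 - t * w))).re by
    obtain ⟨u, hu⟩ := h
    refine ⟨u, fun t ht => ?_⟩
    have hne := mul_ne_zero (one_sub_mul_ne_zero hz (Ioc_subset_Icc_self ht))
      (one_sub_mul_ne_zero hw (Ioc_subset_Icc_self ht))
    rw [← mul_inv, inv_def, ← mul_assoc, re_mul_ofReal]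
    exact mul_pos (hu t ht) (inv_pos.2 (normSq_pos.2 hne))
  have hpos {x : ℂ} (hx : x.re < 1) {t : ℝ} (ht : t ∈ Ioc (0 : ℝ) 1) : 0 < 1 - t * x.re := by
    nlinarith [ht.1, ht.2]
  rcases le_or_gt (z.im * w.im) 0 with him | him
  · refine ⟨1, fun t ht => ?_⟩
    have := mul_pos (hpos hz ht) (hpos hw ht)
    rw [map_mul, one_mul, mul_re]
    simp only [conj_re, conj_im, sub_re, sub_im, one_re, one_im, re_ofReal_mul, im_ofReal_mul]
    nlinarith [mul_nonneg (sq_nonneg t) (neg_nonneg.2 him)]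
  · refine ⟨⟨0, -z.im⟩, fun t ht => ?_⟩
    have h₁ := mul_pos (mul_pos ht.1 him) (hpos hz ht)
    have h₂ : 0 < t * z.im ^ 2 * (1 - t * w.re) :=
      mul_pos (mul_pos ht.1 (sq_pos_of_ne_zero (left_ne_zero_of_mul him.ne'))) (hpos hw ht)
    rw [mul_re, conj_im, mul_im]
    simp only [sub_re, sub_im, one_re, one_im, re_ofReal_mul, im_ofReal_mul]
    linarith

lemma integral_ne_zero_of_mul_re_pos {α : Type*} {m : MeasurableSpace α} {μ : Measure α} [NeZero μ]
    {g : α → ℂ} (hg : Integrable g μ) {u : ℂ} (hu : ∀ᵐ t ∂μ, 0 < (u * g t).re) :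
    ∫ t, g t ∂μ ≠ 0 := by
  intro h0
  have hint : ∫ t, (u * g t).re ∂μ = 0 := by
    rw [show ∫ t, (u * g t).re ∂μ = (∫ t, u * g t ∂μ).re from integral_re (hg.const_mul u),
      integral_const_mul, h0, mul_zero, zero_re]
  have hzero := (integral_eq_zero_iff_of_nonneg_ae (hu.mono fun _ => le_of_lt)
    (hg.const_mul u).re).1 hint
  obtain ⟨t, hpos, hzero⟩ := (hu.and hzero).exists
  exact hpos.ne' hzero

/-- The Stieltjes transform of a measure on the unit interval, normalised so as to be the generating
function `∑ mₙ zⁿ` of the moments of `μ`. -/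
noncomputable def stieltjesTransform (μ : Measure ℝ) (z : ℂ) : ℂ := ∫ t, (1 - t * z)⁻¹ ∂μ

variable {μ : Measure ℝ} [IsFiniteMeasure μ] {z w : ℂ}

lemma integrable_inv_one_sub_mul (hμ : ∀ᵐ t ∂μ, t ∈ Ioc (0 : ℝ) 1)
    (hz : z.re < 1) :
    Integrable (fun t : ℝ => (1 - t * z)⁻¹) μ :=
  .of_bound (Measurable.aestronglyMeasurable (by fun_prop)) _ <|
    hμ.mono fun _ ht => norm_inv_one_sub_mul_le hz le_rfl (Ioc_subset_Icc_self ht)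

lemma integrable_inv_one_sub_mul_mul (hμ : ∀ᵐ t ∂μ, t ∈ Ioc (0 : ℝ) 1)
    (hz : z.re < 1) (hw : w.re < 1) :
    Integrable (fun t : ℝ => (1 - t * z)⁻¹ * (1 - t * w)⁻¹) μ :=
  (integrable_inv_one_sub_mul hμ hw).bdd_mul (Measurable.aestronglyMeasurable (by fun_prop)) <|
    hμ.mono fun _ ht => norm_inv_one_sub_mul_le hz le_rfl (Ioc_subset_Icc_self ht)

lemma mul_stieltjesTransform_sub (hμ : ∀ᵐ t ∂μ, t ∈ Ioc (0 : ℝ) 1)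
    (hz : z.re < 1) (hw : w.re < 1) :
    z * stieltjesTransform μ z - w * stieltjesTransform μ w =
      (z - w) * ∫ t, (1 - t * z)⁻¹ * (1 - t * w)⁻¹ ∂μ := by
  simp only [stieltjesTransform, ← integral_const_mul]
  rw [← integral_sub ((integrable_inv_one_sub_mul hμ hz).const_mul z)
    ((integrable_inv_one_sub_mul hμ hw).const_mul w)]
  refine integral_congr_ae (hμ.mono fun t ht => ?_)
  have hz' := inv_mul_cancel₀ (one_sub_mul_ne_zero hz (Ioc_subset_Icc_self ht))
  have hw' := inv_mul_cancel₀ (one_sub_mul_ne_zero hw (Ioc_subset_Icc_self ht))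
  linear_combination w * (1 - t * w)⁻¹ * hz' - z * (1 - t * z)⁻¹ * hw'

lemma integral_inv_one_sub_mul_mul_ne_zero [NeZero μ]
    (hμ : ∀ᵐ t ∂μ, t ∈ Ioc (0 : ℝ) 1) (hz : z.re < 1) (hw : w.re < 1) :
    ∫ t, (1 - t * z)⁻¹ * (1 - t * w)⁻¹ ∂μ ≠ 0 := by
  obtain ⟨u, hu⟩ := exists_forall_mul_inv_re_pos hz hw
  exact integral_ne_zero_of_mul_re_pos (integrable_inv_one_sub_mul_mul hμ hz hw) (hμ.mono hu)

lemma continuousAt_integral_inv_one_sub_mul_mul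
    (hμ : ∀ᵐ t ∂μ, t ∈ Ioc (0 : ℝ) 1) (hw : w.re < 1) :
    ContinuousAt (fun z : ℂ => ∫ t : ℝ, (1 - t * z)⁻¹ * (1 - t * w)⁻¹ ∂μ) w := by
  obtain ⟨r, hwr, hr⟩ := exists_between hw
  have hnear : ∀ᶠ z : ℂ in 𝓝 w, z.re < r := continuous_re.continuousAt.eventually_lt_const hwr
  refine continuousAt_of_dominated
    (bound := fun t => (min 1 (1 - r))⁻¹ * ‖(1 - t * w)⁻¹‖)
    (.of_forall fun z => Measurable.aestronglyMeasurable (by fun_prop)) ?_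
    ((integrable_inv_one_sub_mul hμ hw).norm.const_mul _) ?_
  · filter_upwards [hnear] with z hz
    filter_upwards [hμ] with t ht
    rw [norm_mul]
    gcongr
    exact norm_inv_one_sub_mul_le hr hz.le (Ioc_subset_Icc_self ht)
  · filter_upwards [hμ] with t ht
    have := one_sub_mul_ne_zero hw (Ioc_subset_Icc_self ht)
    fun_prop (disch := assumption)

theorem injOn_mul_stieltjesTransform [NeZero μ] (hμ : ∀ᵐ t ∂μ, t ∈ Ioc (0 : ℝ) 1) :
    InjOn (fun z => z * stieltjesTransform μ z) {z | z.re < 1} := by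
  intro z hz w hw heq
  have h := mul_stieltjesTransform_sub hμ hz hw
  rw [sub_eq_zero.2 heq, eq_comm, mul_eq_zero] at h
  exact sub_eq_zero.1 (h.resolve_right (integral_inv_one_sub_mul_mul_ne_zero hμ hz hw))

theorem deriv_mul_stieltjesTransform_ne_zero [NeZero μ]
    (hμ : ∀ᵐ t ∂μ, t ∈ Ioc (0 : ℝ) 1) (hw : w.re < 1) :
    deriv (fun z => z * stieltjesTransform μ z) w ≠ 0 := by
  have hderiv : HasDerivAt (fun z => z * stieltjesTransform μ z)
      (∫ t, (1 - t * w)⁻¹ * (1 - t * w)⁻¹ ∂μ) w := by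
    rw [hasDerivAt_iff_tendsto_slope]
    refine ((continuousAt_integral_inv_one_sub_mul_mul hμ hw).tendsto.mono_left
      nhdsWithin_le_nhds).congr' ?_
    have hnear : ∀ᶠ z : ℂ in 𝓝[≠] w, z.re < 1 :=
      nhdsWithin_le_nhds (continuous_re.continuousAt.eventually_lt_const hw)
    filter_upwards [hnear, self_mem_nhdsWithin] with z hz hne
    rw [slope_def_field, mul_stieltjesTransform_sub hμ hz hw,
      mul_div_cancel_left₀ _ (sub_ne_zero.2 hne)]
  rw [hderiv.deriv]
  exact integral_inv_one_sub_mul_mul_ne_zero hμ hw hw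

theorem hasSum_stieltjesTransform (hμ : ∀ᵐ t ∂μ, t ∈ Ioc (0 : ℝ) 1)
    (hz : ‖z‖ < 1) :
    HasSum (fun n : ℕ => ((∫ t, t ^ n ∂μ : ℝ) : ℂ) * z ^ n) (stieltjesTransform μ z) := by
  have hbound (n : ℕ) : ∀ᵐ t : ℝ ∂μ, ‖((t : ℂ) * z) ^ n‖ ≤ ‖z‖ ^ n := by
    filter_upwards [hμ] with t ht
    rw [norm_pow, norm_mul, norm_real, Real.norm_of_nonneg ht.1.le]
    exact pow_le_pow_left₀ (mul_nonneg ht.1.le (norm_nonneg z))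
      (mul_le_of_le_one_left (norm_nonneg z) ht.2) n
  have hint (n : ℕ) : Integrable (fun t : ℝ => ((t : ℂ) * z) ^ n) μ :=
    .of_bound (Measurable.aestronglyMeasurable (by fun_prop)) _ (hbound n)
  have hsummable : Summable fun n : ℕ => ∫ t : ℝ, ‖((t : ℂ) * z) ^ n‖ ∂μ := by
    refine .of_nonneg_of_le (fun n => integral_nonneg fun _ => norm_nonneg _) (fun n => ?_)
      ((summable_geometric_of_lt_one (norm_nonneg z) hz).mul_left (μ.real univ))
    simpa using integral_mono_ae (hint n).norm (integrable_const _) (hbound n)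
  have hsum := hasSum_integral_of_summable_integral_norm hint hsummable
  have htsum : ∫ t : ℝ, ∑' n : ℕ, ((t : ℂ) * z) ^ n ∂μ = stieltjesTransform μ z := by
    refine integral_congr_ae ?_
    filter_upwards [hbound 1] with t ht
    simp only [pow_one] at ht
    exact tsum_geometric_of_norm_lt_one (ht.trans_lt hz)
  rw [htsum] at hsum
  refine hsum.congr_fun fun n => ?_
  simp only [mul_pow, integral_mul_const, ← ofReal_pow, integral_complex_ofReal]

end Stieltjes

section Beta

open ProbabilityTheory

variable {a d : ℝ}

lemma beta_add_one_mul (ha : a ≠ 0) (had : a + d ≠ 0) :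
    beta (a + 1) d * (a + d) = beta a d * a := by
  rw [beta, beta, add_right_comm, Real.Gamma_add_one ha, Real.Gamma_add_one had]
  field_simp

lemma betaPDFReal_nonneg (ha : 0 < a) (hd : 0 < d) (t : ℝ) : 0 ≤ betaPDFReal a d t := by
  by_cases ht : 0 < t ∧ t < 1
  · exact (betaPDFReal_pos ht.1 ht.2 ha hd).le
  · simp [betaPDFReal, ht]

lemma integral_betaPDFReal (ha : 0 < a) (hd : 0 < d) : ∫ t, betaPDFReal a d t = 1 := by
  rw [integral_eq_lintegral_of_nonneg_ae (.of_forall (betaPDFReal_nonneg ha hd))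
    (measurable_betaPDFReal a d).aestronglyMeasurable]
  exact (congrArg ENNReal.toReal (lintegral_betaPDF_eq_one ha hd)).trans ENNReal.toReal_one

lemma measurable_betaPDF (a d : ℝ) : Measurable (betaPDF a d) :=
  (measurable_betaPDFReal a d).ennreal_ofReal

lemma integral_betaMeasure (ha : 0 < a) (hd : 0 < d) (g : ℝ → ℝ) :
    ∫ t, g t ∂betaMeasure a d = ∫ t, betaPDFReal a d t * g t := by
  rw [betaMeasure, integral_withDensity_eq_integral_toReal_smul (measurable_betaPDF a d)
    (.of_forall fun _ => ENNReal.ofReal_lt_top)]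
  simp only [betaPDF, ENNReal.toReal_ofReal (betaPDFReal_nonneg ha hd _), smul_eq_mul]

lemma ae_mem_Ioc_betaMeasure (a d : ℝ) : ∀ᵐ t ∂betaMeasure a d, t ∈ Ioc (0 : ℝ) 1 := by
  rw [betaMeasure, ae_withDensity_iff (measurable_betaPDF a d)]
  refine .of_forall fun t ht => ⟨?_, ?_⟩ <;> contrapose! ht
  · exact betaPDF_eq_zero_of_nonpos ht
  · exact betaPDF_eq_zero_of_one_le ht.le

lemma betaPDFReal_mul_pow (ha : 0 < a) (hd : 0 < d) (n : ℕ) (t : ℝ) :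
    betaPDFReal a d t * t ^ n = beta (a + n) d / beta a d * betaPDFReal (a + n) d t := by
  by_cases ht : 0 < t ∧ t < 1
  · have hn : beta (a + n) d ≠ 0 := (beta_pos (by positivity) hd).ne'
    have hpow : t ^ (a + n - 1) = t ^ (a - 1) * t ^ n := by
      rw [← Real.rpow_add_natCast ht.1.ne']
      ring_nf
    rw [betaPDFReal, betaPDFReal, if_pos ht, if_pos ht, hpow]
    field_simp
  · simp [betaPDFReal, ht]

lemma integral_pow_betaMeasure (ha : 0 < a) (hd : 0 < d) (n : ℕ) :
    ∫ t, t ^ n ∂betaMeasure a d = beta (a + n) d / beta a d := by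
  simp only [integral_betaMeasure ha hd, betaPDFReal_mul_pow ha hd, integral_const_mul,
    integral_betaPDFReal (show 0 < a + n by positivity) hd, mul_one]

end Beta

section PowerSeries

theorem differentiableAt_and_hasSum_mul_deriv {a : ℕ → ℂ} {f : ℂ → ℂ} {R : ℝ}
    (hf : ∀ z ∈ ball (0 : ℂ) R, HasSum (fun n => a n * z ^ n) (f z)) {z : ℂ}
    (hz : z ∈ ball (0 : ℂ) R) :
    DifferentiableAt ℂ f z ∧ HasSum (fun n : ℕ => n * (a n * z ^ n)) (z * deriv f z) := by
  obtain ⟨r, hzr, hrR⟩ := exists_between (mem_ball_zero_iff.1 hz)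
  have hr0 : 0 ≤ r := (norm_nonneg z).trans hzr.le
  have hsummable : Summable fun n => ‖a n * (r : ℂ) ^ n‖ :=
    (hf r (by simpa [abs_of_nonneg hr0] using hrR)).summable.norm
  have hbound (n : ℕ) (w : ℂ) (hw : w ∈ ball (0 : ℂ) r) : ‖a n * w ^ n‖ ≤ ‖a n * (r : ℂ) ^ n‖ := by
    rw [norm_mul, norm_mul, norm_pow, norm_pow, norm_real, Real.norm_of_nonneg hr0]
    gcongr
    exact (mem_ball_zero_iff.1 hw).le
  have hdiff (n : ℕ) : DifferentiableOn ℂ (fun w => a n * w ^ n) (ball 0 r) := by fun_prop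
  have hzr' : z ∈ ball (0 : ℂ) r := mem_ball_zero_iff.2 hzr
  have heq : f =ᶠ[𝓝 z] fun w => ∑' n, a n * w ^ n := by
    filter_upwards [isOpen_ball.mem_nhds hz] with w hw using (hf w hw).tsum_eq.symm
  refine ⟨heq.differentiableAt_iff.2 <| (differentiableOn_tsum_of_summable_norm hsummable hdiff
    isOpen_ball hbound).differentiableAt (isOpen_ball.mem_nhds hzr'), ?_⟩
  rw [heq.deriv_eq]
  refine ((hasSum_deriv_of_summable_norm hsummable hdiff isOpen_ball hbound hzr').mul_left
    z).congr_fun fun n => ?_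
  rw [deriv_const_mul_field, deriv_pow_field]
  rcases n with - | n
  · simp
  · rw [Nat.add_sub_cancel, pow_succ]
    ring

end PowerSeries

section Hypergeometric

/-- The Taylor coefficient `(b)ₙ / (c)ₙ` of `F(1, b; c; z)`. -/
noncomputable def pochhammerRatio (b c : ℝ) (n : ℕ) : ℝ :=
  (ascPochhammer ℝ n).eval b / (ascPochhammer ℝ n).eval c

variable {b c : ℝ}

lemma pochhammerRatio_zero (b c : ℝ) : pochhammerRatio b c 0 = 1 := by
  simp [pochhammerRatio]

lemma pochhammerRatio_self (hb : 0 < b) (n : ℕ) : pochhammerRatio b b n = 1 :=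
  div_self (ascPochhammer_pos n b hb).ne'

lemma pochhammerRatio_succ_mul (hc : 0 < c) (n : ℕ) :
    pochhammerRatio b c (n + 1) * (c + n) = pochhammerRatio b c n * (b + n) := by
  have hn := (ascPochhammer_pos n c hc).ne'
  have hcn : c + n ≠ 0 := by positivity
  simp only [pochhammerRatio, ascPochhammer_succ_eval]
  field_simp

lemma beta_div_beta_eq_pochhammerRatio {d : ℝ} (hb : 0 < b) (hd : 0 < d) (n : ℕ) :
    ProbabilityTheory.beta (b + n) d / ProbabilityTheory.beta b d =
      pochhammerRatio b (b + d) n := by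
  have hbeta := (ProbabilityTheory.beta_pos hb hd).ne'
  induction n with
  | zero => simp [pochhammerRatio_zero, hbeta]
  | succ n ih =>
    have hbn : b + n + d ≠ 0 := by positivity
    have hrec := beta_add_one_mul (a := b + n) (d := d) (by positivity) hbn
    have hratio := pochhammerRatio_succ_mul (b := b) (c := b + d) (by positivity) n
    rw [← ih] at hratio
    refine mul_right_cancel₀ hbn ?_
    rw [Nat.cast_succ, ← add_assoc, div_mul_eq_mul_div, hrec]
    linear_combination -hratio

theorem exists_measure_integral_pow_eq_pochhammerRatio (hb : 0 < b) (hbc : b ≤ c) :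
    ∃ μ : Measure ℝ, IsProbabilityMeasure μ ∧ (∀ᵐ t ∂μ, t ∈ Ioc (0 : ℝ) 1) ∧
      ∀ n : ℕ, ∫ t, t ^ n ∂μ = pochhammerRatio b c n := by
  rcases hbc.eq_or_lt with rfl | hlt
  · refine ⟨Measure.dirac 1, inferInstance, ?_, fun n => ?_⟩
    · simp [ae_dirac_eq]
    · simp [pochhammerRatio_self hb]
  · have hd : 0 < c - b := sub_pos.2 hlt
    refine ⟨ProbabilityTheory.betaMeasure b (c - b),
      ProbabilityTheory.isProbabilityMeasureBeta hb hd, ae_mem_Ioc_betaMeasure _ _, fun n => ?_⟩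
    rw [integral_pow_betaMeasure hb hd, beta_div_beta_eq_pochhammerRatio hb hd, add_sub_cancel]

lemma hyperF_one_eq_tsum (b c : ℝ) (z : ℂ) :
    hyperF 1 b c z = ∑' n, (pochhammerRatio b c n : ℂ) * z ^ n := by
  refine tsum_congr fun n => ?_
  rw [ascPochhammer_eval_one, pochhammerRatio, mul_comm (n.factorial : ℝ),
    mul_div_mul_right _ _ (by positivity)]

lemma hyperF_one_self_eq (hb : 0 < b) (hc : 0 < c) : hyperF 1 b b = hyperF 1 c c := by
  funext z
  simp only [hyperF_one_eq_tsum, pochhammerRatio_self hb, pochhammerRatio_self hc]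

theorem exists_measure_hasSum_stieltjesTransform (hb : 0 < b) (hbc : b ≤ c) :
    ∃ μ : Measure ℝ, IsProbabilityMeasure μ ∧ (∀ᵐ t ∂μ, t ∈ Ioc (0 : ℝ) 1) ∧
      ∀ z ∈ ball (0 : ℂ) 1,
        HasSum (fun n => (pochhammerRatio b c n : ℂ) * z ^ n) (stieltjesTransform μ z) := by
  obtain ⟨μ, hprob, hμ, hmoment⟩ := exists_measure_integral_pow_eq_pochhammerRatio hb hbc
  refine ⟨μ, hprob, hμ, fun z hz => ?_⟩
  simpa only [hmoment] using hasSum_stieltjesTransform hμ (mem_ball_zero_iff.1 hz)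

theorem exists_measure_eqOn_stieltjesTransform (hb : 0 < b) (hbc : b ≤ c) :
    ∃ μ : Measure ℝ, IsProbabilityMeasure μ ∧ (∀ᵐ t ∂μ, t ∈ Ioc (0 : ℝ) 1) ∧
      EqOn (hyperF 1 b c) (stieltjesTransform μ) (ball 0 1) := by
  obtain ⟨μ, hprob, hμ, hsum⟩ := exists_measure_hasSum_stieltjesTransform hb hbc
  exact ⟨μ, hprob, hμ, fun z hz => (hyperF_one_eq_tsum b c z).trans (hsum z hz).tsum_eq⟩

lemma hasSum_hyperF_one (hb : 0 < b) (hbc : b ≤ c) {z : ℂ} (hz : z ∈ ball (0 : ℂ) 1) :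
    HasSum (fun n => (pochhammerRatio b c n : ℂ) * z ^ n) (hyperF 1 b c z) := by
  obtain ⟨μ, -, -, hsum⟩ := exists_measure_hasSum_stieltjesTransform hb hbc
  rw [hyperF_one_eq_tsum]
  exact (hsum z hz).summable.hasSum

lemma differentiableAt_hyperF_one (hb : 0 < b) (hbc : b ≤ c) {z : ℂ} (hz : z ∈ ball (0 : ℂ) 1) :
    DifferentiableAt ℂ (hyperF 1 b c) z :=
  (differentiableAt_and_hasSum_mul_deriv (fun _ => hasSum_hyperF_one hb hbc) hz).1

lemma ball_zero_one_subset_re_lt_one : ball (0 : ℂ) 1 ⊆ {z | z.re < 1} :=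
  fun z hz => (re_le_norm z).trans_lt (mem_ball_zero_iff.1 hz)

theorem injOn_mul_hyperF_one (hb : 0 < b) (hbc : b ≤ c) :
    InjOn (fun z => z * hyperF 1 b c z) (ball 0 1) := by
  obtain ⟨μ, _, hμ, heq⟩ := exists_measure_eqOn_stieltjesTransform hb hbc
  exact ((injOn_mul_stieltjesTransform hμ).mono ball_zero_one_subset_re_lt_one).congr
    fun z hz => by simp only [heq hz]

lemma deriv_mul_hyperF_one_ne_zero (hb : 0 < b) (hbc : b ≤ c) {z : ℂ}
    (hz : z ∈ ball (0 : ℂ) 1) : deriv (fun z => z * hyperF 1 b c z) z ≠ 0 := by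
  obtain ⟨μ, _, hμ, heq⟩ := exists_measure_eqOn_stieltjesTransform hb hbc
  have hnear : (fun z => z * hyperF 1 b c z) =ᶠ[𝓝 z] fun z => z * stieltjesTransform μ z := by
    filter_upwards [isOpen_ball.mem_nhds hz] with w hw using by rw [heq hw]
  rw [hnear.deriv_eq]
  exact deriv_mul_stieltjesTransform_ne_zero hμ (ball_zero_one_subset_re_lt_one hz)

/-- Multiplying the recurrence `aₙ₊₁ (c + n) = aₙ (b + n)` by `zⁿ⁺¹` and summing over `n`. -/
lemma hyperF_one_ode (hb : 0 < b) (hbc : b ≤ c) {z : ℂ} (hz : z ∈ ball (0 : ℂ) 1) :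
    z * (1 - z) * deriv (hyperF 1 b c) z + (c - 1 - b * z) * hyperF 1 b c z = c - 1 := by
  have hF := hasSum_hyperF_one hb hbc hz
  have hθF := (differentiableAt_and_hasSum_mul_deriv (fun _ => hasSum_hyperF_one hb hbc) hz).2
  have hlhs := (hasSum_nat_add_iff' 1).2 (hθF.add (hF.mul_left ((c : ℂ) - 1)))
  have hrhs := (hθF.add (hF.mul_left (b : ℂ))).mul_left z
  have heq := hlhs.unique (hrhs.congr_fun fun n => ?_)
  · simp only [Finset.sum_range_one, pochhammerRatio_zero, ofReal_one, Nat.cast_zero, pow_zero,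
      zero_add, mul_one] at heq
    linear_combination heq
  · have hrec : (pochhammerRatio b c (n + 1) : ℂ) * (c + n) = pochhammerRatio b c n * (b + n) :=
      mod_cast pochhammerRatio_succ_mul (b := b) (hb.trans_le hbc) n
    push_cast
    linear_combination z ^ (n + 1) * hrec

lemma mul_hyperF_one_ode (hb : 0 < b) (hbc : b ≤ c) {z : ℂ} (hz : z ∈ ball (0 : ℂ) 1) :
    z * (1 - z) * deriv (fun z => z * hyperF 1 b c z) z +
      (c - 2 - (b - 1) * z) * (z * hyperF 1 b c z) = (c - 1) * z := by
  rw [((hasDerivAt_id' z).fun_mul (differentiableAt_hyperF_one hb hbc hz).hasDerivAt).deriv]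
  linear_combination z * hyperF_one_ode hb hbc hz

lemma differentiableOn_mul_hyperF_one (hb : 0 < b) (hbc : b ≤ c) :
    DifferentiableOn ℂ (fun z => z * hyperF 1 b c z) (ball 0 1) :=
  differentiableOn_id.mul fun _ hz => (differentiableAt_hyperF_one hb hbc hz).differentiableWithinAt

/-- The parameters `2, b` of the hypergeometric equation for the derivative of `z F(1, b; c; z)` are
interchangeable, and the two orders cover different ranges of `b, c`. -/
theorem one_add_mul_deriv_div_re_pos_mul_hyperF_one (hb : 0 < b) (hbc : b ≤ c)
    (h : b ≤ 2 ∧ 2 ≤ c ∨ 3 ≤ b + c ∧ b < c) {z : ℂ} (hz : z ∈ ball (0 : ℂ) 1) :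
    0 < (1 + z * deriv (deriv fun z => z * hyperF 1 b c z) z /
      deriv (fun z => z * hyperF 1 b c z) z).re := by
  have hdiff := differentiableOn_mul_hyperF_one hb hbc
  have hode {z : ℂ} (hz : z ∈ ball (0 : ℂ) 1) :=
    hypergeometric_ode_deriv isOpen_ball hdiff (fun _ => mul_hyperF_one_ode hb hbc) hz
  have hlower : ∃ a ≤ 2, -(a / 2) < (z * deriv (deriv fun z => z * hyperF 1 b c z) z /
      deriv (fun z => z * hyperF 1 b c z) z).re := by
    rcases h with ⟨hb2, hc2⟩ | ⟨hsum, hlt⟩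
    · refine ⟨b, hb2, mul_deriv_div_re_gt_of_hypergeometric_ode (b := 2) (c := c)
        (hdiff.deriv isOpen_ball) (fun _ => deriv_mul_hyperF_one_ne_zero hb hbc) hb (by linarith)
        hc2 (.inl (by linarith)) (fun w hw => ?_) hz⟩
      push_cast
      linear_combination hode hw
    · refine ⟨2, le_rfl, mul_deriv_div_re_gt_of_hypergeometric_ode (b := b) (c := c)
        (hdiff.deriv isOpen_ball) (fun _ => deriv_mul_hyperF_one_ne_zero hb hbc) two_pos
        (by linarith) hbc (.inr hlt) (fun w hw => ?_) hz⟩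
      push_cast
      linear_combination hode hw
  obtain ⟨a, ha, hlt⟩ := hlower
  rw [add_re, one_re]
  linarith

theorem convex_image_mul_hyperF_one (hb : 0 < b) (hbc : b ≤ c)
    (h : b ≤ 2 ∧ 2 ≤ c ∨ 3 ≤ b + c ∧ b < c) :
    Convex ℝ ((fun z => z * hyperF 1 b c z) '' ball 0 1) :=
  convex_image_ball_of_one_add_mul_deriv_div_re_pos (differentiableOn_mul_hyperF_one hb hbc)
    (injOn_mul_hyperF_one hb hbc) (fun _ => deriv_mul_hyperF_one_ne_zero hb hbc)
    fun _ => one_add_mul_deriv_div_re_pos_mul_hyperF_one hb hbc h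

end Hypergeometric

theorem stmt_19_general (b c : ℝ) (hb : 0 < b) (hbc : b ≤ c) (h : 2 ≤ c ∨ 3 ≤ b + c) :
    InjOn (fun z : ℂ => z * hyperF 1 b c z) (ball (0 : ℂ) 1) ∧
    Convex ℝ ((fun z : ℂ => z * hyperF 1 b c z) '' ball (0 : ℂ) 1) := by
  refine ⟨injOn_mul_hyperF_one hb hbc, ?_⟩
  rcases hbc.eq_or_lt with rfl | hlt
  · rw [hyperF_one_self_eq hb two_pos]
    exact convex_image_mul_hyperF_one two_pos le_rfl (.inl ⟨le_rfl, le_rfl⟩)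
  · refine convex_image_mul_hyperF_one hb hbc ?_
    rcases le_or_gt 3 (b + c) with hsum | hsum
    · exact .inr ⟨hsum, hlt⟩
    · have hc : 2 ≤ c := h.resolve_right hsum.not_ge
      exact .inl ⟨by linarith, hc⟩

theorem stmt_19 (b c : ℝ) (hb : 0 < b) (hbc : b ≤ c)
    (h : (b ≤ 4 ∧ 2 ≤ c) ∨ (1 ≤ c ∧ c < min 2 (1 + b) ∧ 3 - b ≤ c)) :
    Set.InjOn (fun z : ℂ => z * hyperF 1 b c z) (Metric.ball (0 : ℂ) 1) ∧
    Convex ℝ ((fun z : ℂ => z * hyperF 1 b c z) '' Metric.ball (0 : ℂ) 1) :=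
  stmt_19_general b c hb hbc (h.imp And.right fun h => by linarith [h.2.2])
end
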